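/- arXiv:1807.00027 — 3 statements merged into one kernel-verified Lean document; each statement's English description precedes it below -/
import Mathlib

section
/- Let (μ_i)_{1≤i≤n} be Borel probability measures on ℝ^d. For a set S ⊂ [n] := {1,…,n}, let μ_S denote the convolution of (μ_i)_{i∈S}. If 𝒞 is a collection of distinct subsets of [n] with t := min_{i∈[n]} #{S ∈ 𝒞 : i ∈ S} ≥ 1, then C_p(μ_{[n]}) ≤ (1/t) Σ_{S∈𝒞} C_p(μ_S). -/
open MeasureTheory ProbabilityTheory ENNReal

/-- The Poincaré constant of a Borel probability measure on `ℝ^d`: the smallest constant `C`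
such that `Var_μ(f) ≤ C ∫ |∇f|² dμ` for all locally Lipschitz `f : ℝ^d → ℝ`
(`+∞` if no finite constant works). -/
noncomputable def poincareConst {d : ℕ} (μ : Measure (EuclideanSpace ℝ (Fin d))) : ℝ≥0∞ :=
  sInf {C : ℝ≥0∞ | ∀ f : EuclideanSpace ℝ (Fin d) → ℝ, LocallyLipschitz f →
    evariance f μ ≤ C * ∫⁻ x, ‖gradient f x‖₊ ^ 2 ∂μ}

/-- The convolution `⋆_{i ∈ S} μ_i` of the measures `(μ_i)_{i ∈ S}`, i.e. the law of
`∑_{i ∈ S} X_i` for independent `X_i ~ μ_i`. -/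
noncomputable def convOver {d n : ℕ} (μs : Fin n → Measure (EuclideanSpace ℝ (Fin d)))
    (S : Finset (Fin n)) : Measure (EuclideanSpace ℝ (Fin d)) :=
  Measure.map (fun x : Fin n → EuclideanSpace ℝ (Fin d) => ∑ i ∈ S, x i) (Measure.pi μs)

@[fun_prop]
lemma measurable_finset_piecewise {ι E α : Type*} [DecidableEq ι] [MeasurableSpace E]
    [MeasurableSpace α] (S : Finset ι)
    {f g : α → ι → E} (hf : Measurable f) (hg : Measurable g) :
    Measurable fun a => S.piecewise (f a) (g a) := by
  refine measurable_pi_lambda _ fun i => ?_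
  by_cases hi : i ∈ S
  · simpa [hi] using measurable_pi_iff.1 hf i
  · simpa [hi] using measurable_pi_iff.1 hg i

section Resampling

variable {ι E : Type*} [Fintype ι] [DecidableEq ι] [MeasurableSpace E]

variable (μ : ι → Measure E) [∀ i, IsProbabilityMeasure (μ i)]

/-- Exchanging a set of coordinates between two independent copies preserves their joint law. -/
lemma measurePreserving_exchange (S : Finset ι) :
    MeasurePreserving (fun p : (ι → E) × (ι → E) => (S.piecewise p.2 p.1, S.piecewise p.1 p.2))
      ((Measure.pi μ).prod (Measure.pi μ)) ((Measure.pi μ).prod (Measure.pi μ)) := by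
  have h1 := measurePreserving_arrowProdEquivProdArrow E E ι μ μ
  have h2 : MeasurePreserving
      (fun (a : ι → E × E) i => (if i ∈ S then Prod.swap else id : E × E → E × E) (a i))
      (Measure.pi fun i => (μ i).prod (μ i)) (Measure.pi fun i => (μ i).prod (μ i)) := by
    refine measurePreserving_pi _ _ fun i => ?_
    by_cases hi : i ∈ S
    · simpa [hi] using Measure.measurePreserving_swap
    · simpa [hi] using MeasurePreserving.id _
  have h3 := h1.comp (h2.comp (h1.symm _))
  convert h3 using 1
  funext p
  ext i <;> by_cases hi : i ∈ S <;>
    simp [hi, MeasurableEquiv.arrowProdEquivProdArrow, Equiv.arrowProdEquivProdArrow]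

/-- Resampling a set of coordinates preserves a product measure. -/
lemma measurePreserving_resample (S : Finset ι) :
    MeasurePreserving (fun p : (ι → E) × (ι → E) => S.piecewise p.2 p.1)
      ((Measure.pi μ).prod (Measure.pi μ)) (Measure.pi μ) :=
  measurePreserving_fst.comp (measurePreserving_exchange μ S)

/-- The function `F` averaged over the coordinates in `S`. -/
noncomputable def coordAverage (S : Finset ι) (F : (ι → E) → ℝ) (x : ι → E) : ℝ :=
  ∫ y, F (S.piecewise y x) ∂Measure.pi μ

/-- The correlation of `F` with its copy in which the coordinates in `S` are resampled. -/
noncomputable def resampledCorr (F : (ι → E) → ℝ) (S : Finset ι) : ℝ :=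
  ∫ x, F x * coordAverage μ S F x ∂Measure.pi μ

/-- The expected squared difference of `F` and its copy in which the coordinates in `S` are
resampled. -/
noncomputable def resampledEnergy (F : (ι → E) → ℝ) (S : Finset ι) : ℝ≥0∞ :=
  ∫⁻ x, ∫⁻ y, ‖F x - F (S.piecewise y x)‖ₑ ^ 2 ∂Measure.pi μ ∂Measure.pi μ

variable {μ} {F G : (ι → E) → ℝ} {K L : ℝ}

lemma measurable_coordAverage (S : Finset ι) (hF : Measurable F) :
    Measurable (coordAverage μ S F) := by
  have h : Measurable fun p : (ι → E) × (ι → E) => F (S.piecewise p.2 p.1) := by fun_prop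
  exact (h.stronglyMeasurable.integral_prod_right').measurable

lemma abs_coordAverage_le (S : Finset ι) (hK : ∀ x, |F x| ≤ K) (x : ι → E) :
    |coordAverage μ S F x| ≤ K := by
  simpa [coordAverage] using norm_integral_le_of_norm_le_const (μ := Measure.pi μ)
    (f := fun y => F (S.piecewise y x)) (.of_forall fun y => hK _)

lemma integrable_of_abs_le {α : Type*} [MeasurableSpace α] {ν : Measure α} [IsFiniteMeasure ν]
    {f : α → ℝ} {C : ℝ} (hf : Measurable f) (h : ∀ x, |f x| ≤ C) : Integrable f ν :=
  .of_bound hf.aestronglyMeasurable C (.of_forall h)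

lemma abs_mul_le_of_abs_le {a b : ℝ} (ha : |a| ≤ K) (hb : |b| ≤ L) : |a * b| ≤ K * L := by
  rw [abs_mul]
  exact mul_le_mul ha hb (abs_nonneg _) ((abs_nonneg _).trans ha)

/-- Averaging over coordinates is self-adjoint. -/
lemma integral_coordAverage_mul (S : Finset ι) (hF : Measurable F) (hK : ∀ x, |F x| ≤ K)
    (hG : Measurable G) (hL : ∀ x, |G x| ≤ L) :
    ∫ x, coordAverage μ S F x * G x ∂Measure.pi μ =
      ∫ x, F x * coordAverage μ S G x ∂Measure.pi μ := by
  have hm1 : Measurable fun p : (ι → E) × (ι → E) => F (S.piecewise p.2 p.1) * G p.1 := by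
    fun_prop
  have hm2 : Measurable fun p : (ι → E) × (ι → E) => F p.1 * G (S.piecewise p.2 p.1) := by
    fun_prop
  have h1 := integral_prod _ (integrable_of_abs_le (ν := (Measure.pi μ).prod (Measure.pi μ)) hm1
    fun p => abs_mul_le_of_abs_le (hK _) (hL _))
  have h2 := integral_prod _ (integrable_of_abs_le (ν := (Measure.pi μ).prod (Measure.pi μ)) hm2
    fun p => abs_mul_le_of_abs_le (hK _) (hL _))
  simp only [integral_mul_const] at h1
  simp only [integral_const_mul] at h2
  simp only [coordAverage]
  rw [← h1, ← h2]
  have hmp := measurePreserving_exchange μ S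
  have h3 := integral_map (μ := (Measure.pi μ).prod (Measure.pi μ)) hmp.measurable.aemeasurable
    (f := fun p : (ι → E) × (ι → E) => F p.1 * G (S.piecewise p.2 p.1)) hm2.aestronglyMeasurable
  rw [hmp.map_eq] at h3
  rw [h3]
  congr with p
  congr 2
  ext i
  by_cases hi : i ∈ S <;> simp [hi]

/-- Averaging successively over two sets of coordinates averages over their union. -/
lemma coordAverage_coordAverage (S T : Finset ι) (hF : Measurable F) (hK : ∀ x, |F x| ≤ K) :
    coordAverage μ S (coordAverage μ T F) = coordAverage μ (S ∪ T) F := by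
  funext x
  simp only [coordAverage]
  have hm : Measurable fun p : (ι → E) × (ι → E) =>
      F (T.piecewise p.2 (S.piecewise p.1 x)) := by fun_prop
  have hm' : Measurable fun y : ι → E => F ((S ∪ T).piecewise y x) := by fun_prop
  have h1 := integral_prod _ (integrable_of_abs_le (ν := (Measure.pi μ).prod (Measure.pi μ)) hm
    fun p => hK _)
  have hmp := measurePreserving_resample μ T
  have h3 := integral_map (μ := (Measure.pi μ).prod (Measure.pi μ)) hmp.measurable.aemeasurable
    (f := fun y => F ((S ∪ T).piecewise y x)) hm'.aestronglyMeasurable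
  rw [hmp.map_eq] at h3
  rw [← h1, h3]
  congr with p
  congr 1
  ext i
  by_cases hi : i ∈ S <;> by_cases hi' : i ∈ T <;> simp [hi, hi']

lemma integral_coordAverage_mul_coordAverage (S T : Finset ι) (hF : Measurable F)
    (hK : ∀ x, |F x| ≤ K) :
    ∫ x, coordAverage μ S F x * coordAverage μ T F x ∂Measure.pi μ =
      resampledCorr μ F (S ∪ T) := by
  rw [integral_coordAverage_mul S hF hK (measurable_coordAverage T hF)
    (abs_coordAverage_le T hK), coordAverage_coordAverage S T hF hK, resampledCorr]

lemma integrable_coordAverage_mul (S T : Finset ι) (hF : Measurable F) (hK : ∀ x, |F x| ≤ K) :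
    Integrable (fun x => coordAverage μ S F x * coordAverage μ T F x) (Measure.pi μ) :=
  integrable_of_abs_le ((measurable_coordAverage S hF).mul (measurable_coordAverage T hF))
    fun x => abs_mul_le_of_abs_le (abs_coordAverage_le S hK x) (abs_coordAverage_le T hK x)

/-- The quadratic form attached to `resampledCorr` is positive semidefinite. -/
lemma sum_mul_resampledCorr_union_nonneg (hF : Measurable F) (hK : ∀ x, |F x| ≤ K) {m : ℕ}
    (c : Fin m → ℝ) (T : Fin m → Finset ι) :
    0 ≤ ∑ k, ∑ l, c k * c l * resampledCorr μ F (T k ∪ T l) := by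
  have h0 : 0 ≤ ∫ x, (∑ k, c k * coordAverage μ (T k) F x) ^ 2 ∂Measure.pi μ :=
    integral_nonneg fun x => sq_nonneg _
  have h1 : ∀ x, (∑ k, c k * coordAverage μ (T k) F x) ^ 2 =
      ∑ k, ∑ l, c k * c l * (coordAverage μ (T k) F x * coordAverage μ (T l) F x) := fun x => by
    rw [sq, Finset.sum_mul_sum]
    exact Finset.sum_congr rfl fun k _ => Finset.sum_congr rfl fun l _ => by ring
  have hi := fun k l => (integrable_coordAverage_mul (μ := μ) (T k) (T l) hF hK).const_mul
    (c k * c l)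
  simp_rw [h1] at h0
  rw [integral_finsetSum _ fun k _ => integrable_finsetSum _ fun l _ => hi k l] at h0
  simp_rw [integral_finsetSum _ fun l _ => hi _ l, integral_const_mul,
    integral_coordAverage_mul_coordAverage _ _ hF hK] at h0
  exact h0

lemma resampledCorr_anti (hF : Measurable F) (hK : ∀ x, |F x| ≤ K) {S T : Finset ι}
    (hST : S ⊆ T) : resampledCorr μ F T ≤ resampledCorr μ F S := by
  have h := sum_mul_resampledCorr_union_nonneg (μ := μ) hF hK ![1, -1] ![S, T]
  simp [Fin.sum_univ_succ, Finset.union_eq_right.2 hST, Finset.union_eq_left.2 hST] at h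
  linarith

lemma resampledCorr_supermodular (hF : Measurable F) (hK : ∀ x, |F x| ≤ K) {W U : Finset ι}
    (hWU : W ⊆ U) (i : ι) :
    resampledCorr μ F U + resampledCorr μ F (insert i W) ≤
      resampledCorr μ F W + resampledCorr μ F (insert i U) := by
  have h := sum_mul_resampledCorr_union_nonneg (μ := μ) hF hK ![1, -1, -1, 1]
    ![W, insert i W, U, insert i U]
  simp [Fin.sum_univ_succ, Finset.union_eq_right.2 hWU, Finset.union_eq_left.2 hWU] at h
  linarith

/-- Shearer's inequality for the correlations `resampledCorr`. -/
lemma mul_resampledCorr_sub_le (hF : Measurable F) (hK : ∀ x, |F x| ≤ K)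
    (𝒞 : Finset (Finset ι)) (t : ℕ) (ht : ∀ i, t ≤ (𝒞.filter fun S => i ∈ S).card)
    (U : Finset ι) :
    t * (resampledCorr μ F ∅ - resampledCorr μ F U) ≤
      ∑ S ∈ 𝒞, (resampledCorr μ F ∅ - resampledCorr μ F (S ∩ U)) := by
  induction U using Finset.induction_on with
  | empty => simp
  | insert i U hi ih =>
    set δ := resampledCorr μ F U - resampledCorr μ F (insert i U) with hδ
    have hδ0 : 0 ≤ δ := sub_nonneg.2 (resampledCorr_anti hF hK (Finset.subset_insert i U))
    have h1 : ∀ S ∈ 𝒞, (resampledCorr μ F ∅ - resampledCorr μ F (S ∩ U)) +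
        (if i ∈ S then δ else 0) ≤
        resampledCorr μ F ∅ - resampledCorr μ F (S ∩ insert i U) := fun S _ => by
      split_ifs with hS
      · have := resampledCorr_supermodular (μ := μ) hF hK
          (Finset.inter_subset_right : S ∩ U ⊆ U) i
        rw [Finset.inter_insert_of_mem hS]
        linarith
      · rw [Finset.inter_insert_of_notMem hS, add_zero]
    have h2 := Finset.sum_le_sum h1
    rw [Finset.sum_add_distrib, ← Finset.sum_filter, Finset.sum_const, nsmul_eq_mul] at h2
    have h3 : (t : ℝ) * δ ≤ (𝒞.filter fun S => i ∈ S).card * δ :=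
      mul_le_mul_of_nonneg_right (by exact_mod_cast ht i) hδ0
    calc (t : ℝ) * (resampledCorr μ F ∅ - resampledCorr μ F (insert i U))
        = t * (resampledCorr μ F ∅ - resampledCorr μ F U) + t * δ := by rw [hδ]; ring
      _ ≤ _ := by linarith

lemma resampledEnergy_eq_ofReal (hF : Measurable F) (hK : ∀ x, |F x| ≤ K) (S : Finset ι) :
    resampledEnergy μ F S =
      ENNReal.ofReal (2 * (resampledCorr μ F ∅ - resampledCorr μ F S)) := by
  have hS : Measurable fun p : (ι → E) × (ι → E) => F (S.piecewise p.2 p.1) := by fun_prop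
  have hF1 : Measurable fun p : (ι → E) × (ι → E) => F p.1 := by fun_prop
  have i11 : Integrable (fun p : (ι → E) × (ι → E) => F p.1 * F p.1)
      ((Measure.pi μ).prod (Measure.pi μ)) := integrable_of_abs_le (hF1.mul hF1) fun p => abs_mul_le_of_abs_le (hK _) (hK _)
  have i12 : Integrable (fun p : (ι → E) × (ι → E) => F p.1 * F (S.piecewise p.2 p.1))
      ((Measure.pi μ).prod (Measure.pi μ)) := integrable_of_abs_le (hF1.mul hS) fun p => abs_mul_le_of_abs_le (hK _) (hK _)
  have i22 : Integrable (fun p : (ι → E) × (ι → E) => F (S.piecewise p.2 p.1) * F (S.piecewise p.2 p.1))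
      ((Measure.pi μ).prod (Measure.pi μ)) := integrable_of_abs_le (hS.mul hS) fun p => abs_mul_le_of_abs_le (hK _) (hK _)
  have e11 : ∫ p : (ι → E) × (ι → E), F p.1 * F p.1 ∂(Measure.pi μ).prod (Measure.pi μ) =
      resampledCorr μ F ∅ := by
    refine (integral_prod _ i11).trans ?_
    simp [resampledCorr, coordAverage]
  have e12 : ∫ p : (ι → E) × (ι → E), F p.1 * F (S.piecewise p.2 p.1)
      ∂(Measure.pi μ).prod (Measure.pi μ) = resampledCorr μ F S := by
    refine (integral_prod _ i12).trans ?_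
    simp [resampledCorr, coordAverage, integral_const_mul]
  have e22 : ∫ p : (ι → E) × (ι → E), F (S.piecewise p.2 p.1) * F (S.piecewise p.2 p.1)
      ∂(Measure.pi μ).prod (Measure.pi μ) = resampledCorr μ F ∅ := by
    have hmp := measurePreserving_resample μ S
    have h3 := integral_map (μ := (Measure.pi μ).prod (Measure.pi μ)) hmp.measurable.aemeasurable
      (f := fun x => F x * F x) (hF.mul hF).aestronglyMeasurable
    rw [hmp.map_eq] at h3
    rw [← h3]
    simp [resampledCorr, coordAverage]
  have e : ∫ p : (ι → E) × (ι → E), (F p.1 - F (S.piecewise p.2 p.1)) ^ 2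
      ∂(Measure.pi μ).prod (Measure.pi μ) =
      2 * (resampledCorr μ F ∅ - resampledCorr μ F S) := by
    have h : ∀ p : (ι → E) × (ι → E), (F p.1 - F (S.piecewise p.2 p.1)) ^ 2 =
        (F p.1 * F p.1 - 2 * (F p.1 * F (S.piecewise p.2 p.1))) +
          F (S.piecewise p.2 p.1) * F (S.piecewise p.2 p.1) := fun p => by ring
    have hsub : Integrable (fun p : (ι → E) × (ι → E) =>
        F p.1 * F p.1 - 2 * (F p.1 * F (S.piecewise p.2 p.1)))
        ((Measure.pi μ).prod (Measure.pi μ)) := i11.sub (i12.const_mul 2)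
    simp_rw [h]
    rw [integral_add hsub i22, integral_sub i11 (i12.const_mul 2),
      integral_const_mul, e11, e12, e22]
    ring
  have hm : Measurable fun p : (ι → E) × (ι → E) => F p.1 - F (S.piecewise p.2 p.1) := hF1.sub hS
  rw [← e, ofReal_integral_eq_lintegral_ofReal _ (.of_forall fun p => sq_nonneg _),
    lintegral_prod _ (hm.pow_const 2).ennreal_ofReal.aemeasurable, resampledEnergy]
  · refine lintegral_congr fun x => lintegral_congr fun y => ?_
    rw [← ofReal_norm, ← ENNReal.ofReal_pow (norm_nonneg _), Real.norm_eq_abs, sq_abs]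
  · refine integrable_of_abs_le (C := (K + K) ^ 2) (hm.pow_const 2) fun p => ?_
    rw [abs_pow]
    refine pow_le_pow_left₀ (abs_nonneg _) ((abs_sub _ _).trans ?_) 2
    exact add_le_add (hK _) (hK _)

lemma mul_resampledEnergy_le_of_bounded (hF : Measurable F) (hK : ∀ x, |F x| ≤ K)
    (𝒞 : Finset (Finset ι)) (t : ℕ) (ht : ∀ i, t ≤ (𝒞.filter fun S => i ∈ S).card) :
    t * resampledEnergy μ F Finset.univ ≤ ∑ S ∈ 𝒞, resampledEnergy μ F S := by
  simp_rw [resampledEnergy_eq_ofReal hF hK]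
  have h := mul_resampledCorr_sub_le (μ := μ) hF hK 𝒞 t ht Finset.univ
  rw [← ENNReal.ofReal_natCast, ← ENNReal.ofReal_mul (Nat.cast_nonneg t),
    ← ENNReal.ofReal_sum_of_nonneg fun S _ =>
      mul_nonneg zero_le_two (sub_nonneg.2 (resampledCorr_anti hF hK (Finset.empty_subset S))),
    ← Finset.mul_sum]
  simp only [Finset.inter_univ] at h
  exact ENNReal.ofReal_le_ofReal (by linarith)

/-- Shearer's inequality for the variance (a generalisation of the Efron-Stein inequality),
without integrability assumptions. -/
lemma mul_resampledEnergy_le (hF : Measurable F) (𝒞 : Finset (Finset ι)) (t : ℕ)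
    (ht : ∀ i, t ≤ (𝒞.filter fun S => i ∈ S).card) :
    t * resampledEnergy μ F Finset.univ ≤ ∑ S ∈ 𝒞, resampledEnergy μ F S := by
  let T : ℕ → ℝ → ℝ := fun N a => max (-N) (min a N)
  have hTm : ∀ N, Measurable (T N) := fun N => by fun_prop
  have hTb : ∀ N a, |T N a| ≤ N := fun N a =>
    abs_le.2 ⟨le_max_left _ _, max_le (by linarith [N.cast_nonneg (α := ℝ)]) (min_le_right _ _)⟩
  have hTl : ∀ N a b, ‖T N a - T N b‖ₑ ≤ ‖a - b‖ₑ := fun N a b => by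
    rw [← ofReal_norm, ← ofReal_norm]
    refine ENNReal.ofReal_le_ofReal ?_
    simpa using (abs_max_sub_max_le_max (-N : ℝ) (min a N) (-N) (min b N)).trans
      (max_le_max le_rfl (abs_min_sub_min_le_max a N b N))
  have hTt : ∀ a b, Filter.Tendsto (fun N => ‖T N a - T N b‖ₑ ^ 2) Filter.atTop
      (nhds (‖a - b‖ₑ ^ 2)) := fun a b => by
    refine tendsto_const_nhds.congr' ?_
    obtain ⟨N₀, hN₀⟩ := exists_nat_ge (max |a| |b|)
    filter_upwards [Filter.eventually_ge_atTop N₀] with N hN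
    have hN' : max |a| |b| ≤ N := hN₀.trans (by exact_mod_cast hN)
    have ha := abs_le.1 ((le_max_left _ _).trans hN')
    have hb := abs_le.1 ((le_max_right _ _).trans hN')
    simp only [T]
    rw [min_eq_left ha.2, min_eq_left hb.2, max_eq_right ha.1, max_eq_right hb.1]
  have hle : ∀ N S, resampledEnergy μ (T N ∘ F) S ≤ resampledEnergy μ F S := fun N S =>
    lintegral_mono fun x => lintegral_mono fun y => pow_le_pow_left' (hTl N _ _) 2
  have hmeas : ∀ N, Measurable fun p : (ι → E) × (ι → E) =>
      ‖T N (F p.1) - T N (F p.2)‖ₑ ^ 2 := fun N => by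
    have := hTm N
    fun_prop
  have hlim : resampledEnergy μ F Finset.univ ≤
      Filter.liminf (fun N => resampledEnergy μ (T N ∘ F) Finset.univ) Filter.atTop := by
    have hprod : ∀ N, resampledEnergy μ (T N ∘ F) Finset.univ =
        ∫⁻ p : (ι → E) × (ι → E), ‖T N (F p.1) - T N (F p.2)‖ₑ ^ 2
          ∂(Measure.pi μ).prod (Measure.pi μ) := fun N => by
      rw [lintegral_prod _ (hmeas N).aemeasurable]
      simp [resampledEnergy]
    have hprod' : resampledEnergy μ F Finset.univ =
        ∫⁻ p : (ι → E) × (ι → E), ‖F p.1 - F p.2‖ₑ ^ 2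
          ∂(Measure.pi μ).prod (Measure.pi μ) := by
      rw [lintegral_prod _ (by fun_prop)]
      simp [resampledEnergy]
    simp_rw [hprod, hprod']
    refine le_trans (lintegral_mono fun p => ?_) (lintegral_liminf_le hmeas)
    exact (hTt _ _).liminf_eq.ge
  rcases Nat.eq_zero_or_pos t with rfl | ht0
  · simp
  have ht0' : (t : ℝ≥0∞) ≠ 0 := by exact_mod_cast ht0.ne'
  rw [mul_comm, ← ENNReal.le_div_iff_mul_le (.inl ht0') (.inl (ENNReal.natCast_ne_top t))]
  refine hlim.trans (Filter.liminf_le_of_le (by isBoundedDefault) fun b hb => ?_)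
  obtain ⟨N, hN⟩ := hb.exists
  refine hN.trans ?_
  rw [ENNReal.le_div_iff_mul_le (.inl ht0') (.inl (ENNReal.natCast_ne_top t)), mul_comm]
  exact (mul_resampledEnergy_le_of_bounded ((hTm N).comp hF) (fun x => hTb N _)
    𝒞 t ht).trans (Finset.sum_le_sum fun S _ => hle N S)

end Resampling

/-- The variance is half the expected squared difference of two independent copies, without
integrability assumptions. -/
lemma lintegral_lintegral_enorm_sub_sq {Ω : Type*} [MeasurableSpace Ω] {ν : Measure Ω}
    [IsProbabilityMeasure ν] {X : Ω → ℝ} (hX : Measurable X) :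
    ∫⁻ x, ∫⁻ y, ‖X x - X y‖ₑ ^ 2 ∂ν ∂ν = 2 * evariance X ν := by
  by_cases h2 : MemLp X 2 ν
  · have hi : Integrable X ν := h2.integrable one_le_two
    have hsq : Integrable (fun x => X x ^ 2) ν := h2.integrable_sq
    have hinner : ∀ x, ∫⁻ y, ‖X x - X y‖ₑ ^ 2 ∂ν =
        ENNReal.ofReal (∫ y, (X x - X y) ^ 2 ∂ν) := fun x => by
      have hd : Integrable (fun y => (X x - X y) ^ 2) ν :=
        ((memLp_const (X x)).sub h2).integrable_sq
      rw [ofReal_integral_eq_lintegral_ofReal hd (.of_forall fun y => sq_nonneg _)]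
      refine lintegral_congr fun y => ?_
      rw [← ofReal_norm, ← ENNReal.ofReal_pow (norm_nonneg _), Real.norm_eq_abs, sq_abs]
    have hval : ∀ x, ∫ y, (X x - X y) ^ 2 ∂ν = X x ^ 2 - 2 * X x * ν[X] + ν[X ^ 2] := fun x => by
      have h : ∀ y, (X x - X y) ^ 2 = (X x ^ 2 - 2 * X x * X y) + X y ^ 2 := fun y => by ring
      have hsub : Integrable (fun y => X x ^ 2 - 2 * X x * X y) ν :=
        (integrable_const _).sub (hi.const_mul _)
      simp_rw [h]
      rw [integral_add hsub hsq, integral_sub (integrable_const _) (hi.const_mul _), integral_const_mul]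
      simp
    have hsub : Integrable (fun x => X x ^ 2 - 2 * X x * ν[X]) ν :=
      hsq.sub ((hi.const_mul 2).mul_const _)
    have hint : Integrable (fun x => X x ^ 2 - 2 * X x * ν[X] + ν[X ^ 2]) ν :=
      hsub.add (integrable_const _)
    have hnn : ∀ x, 0 ≤ X x ^ 2 - 2 * X x * ν[X] + ν[X ^ 2] := fun x =>
      hval x ▸ integral_nonneg fun y => sq_nonneg _
    simp_rw [hinner, hval]
    rw [← ofReal_integral_eq_lintegral_ofReal hint (.of_forall hnn),
      ← ofReal_variance h2, variance_eq_sub h2, ← ENNReal.ofReal_ofNat 2,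
      ← ENNReal.ofReal_mul zero_le_two]
    congr 1
    rw [integral_add hsub (integrable_const _),
      integral_sub hsq ((hi.const_mul 2).mul_const _), integral_mul_const, integral_const_mul]
    simp
    ring
  · have hinner : ∀ x, ∫⁻ y, ‖X x - X y‖ₑ ^ 2 ∂ν = ∞ := fun x => by
      by_contra hne
      have h : MemLp (fun y => X x - X y) 2 ν := by
        refine ⟨(measurable_const.sub hX).aestronglyMeasurable, ?_⟩
        rw [eLpNorm_lt_top_iff_lintegral_rpow_enorm_lt_top two_ne_zero ENNReal.ofNat_ne_top]
        simpa using lt_top_iff_ne_top.2 hne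
      refine h2 ?_
      have := (memLp_const (μ := ν) (p := 2) (X x)).sub h
      simpa [Pi.sub_def] using this
    rw [evariance_eq_top hX.aestronglyMeasurable h2]
    simp [hinner]

lemma gradient_comp_add_left {H : Type*} [NormedAddCommGroup H] [InnerProductSpace ℝ H]
    [CompleteSpace H] (f : H → ℝ) (a x : H) :
    gradient (fun z => f (a + z)) x = gradient f (a + x) := by
  rw [gradient, gradient, fderiv_comp_add_left]

lemma measurable_gradient {H : Type*} [NormedAddCommGroup H] [InnerProductSpace ℝ H]
    [CompleteSpace H] [MeasurableSpace H] [BorelSpace H] (f : H → ℝ) :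
    Measurable (gradient f) :=
  (InnerProductSpace.toDual ℝ H).symm.continuous.measurable.comp (measurable_fderiv ℝ f)

lemma sum_piecewise_eq_compl_add {ι M : Type*} [Fintype ι] [DecidableEq ι] [AddCommMonoid M]
    (S : Finset ι) (x w : ι → M) :
    ∑ i, S.piecewise x w i = ∑ i ∈ Sᶜ, w i + ∑ i ∈ S, x i := by
  rw [← Finset.sum_compl_add_sum S]
  congr 1
  · exact Finset.sum_congr rfl fun i hi => by simp [Finset.mem_compl.1 hi]
  · exact Finset.sum_congr rfl fun i hi => by simp [hi]

section Convolution

variable {d n : ℕ} {μs : Fin n → Measure (EuclideanSpace ℝ (Fin d))}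
  [∀ i, IsProbabilityMeasure (μs i)] {f : EuclideanSpace ℝ (Fin d) → ℝ}

lemma measurable_sum_coord (S : Finset (Fin n)) :
    Measurable fun x : Fin n → EuclideanSpace ℝ (Fin d) => ∑ i ∈ S, x i := by fun_prop

instance (S : Finset (Fin n)) : IsProbabilityMeasure (convOver μs S) :=
  Measure.isProbabilityMeasure_map (measurable_sum_coord S).aemeasurable

/-- The resampled energy of a function of the sum, conditionally on the coordinates outside `S`. -/
lemma resampledEnergy_comp_sum (hf : Measurable f) (S : Finset (Fin n)) :
    resampledEnergy μs (fun x => f (∑ i, x i)) S =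
      2 * ∫⁻ w, evariance (fun z => f (∑ i ∈ Sᶜ, w i + z)) (convOver μs S) ∂Measure.pi μs := by
  have hmp := measurePreserving_resample μs S
  have hpw : ∀ x y w : Fin n → EuclideanSpace ℝ (Fin d),
      S.piecewise y (S.piecewise x w) = S.piecewise y w := fun x y w => by
    ext i
    by_cases hi : i ∈ S <;> simp [hi]
  have hm : Measurable fun p : (Fin n → EuclideanSpace ℝ (Fin d)) ×
      (Fin n → EuclideanSpace ℝ (Fin d)) =>
      ‖f (∑ i, p.1 i) - f (∑ i, S.piecewise p.2 p.1 i)‖ₑ ^ 2 := by fun_prop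
  have hm1 : Measurable fun x : Fin n → EuclideanSpace ℝ (Fin d) =>
      ∫⁻ y, ‖f (∑ i, x i) - f (∑ i, S.piecewise y x i)‖ₑ ^ 2 ∂Measure.pi μs :=
    hm.lintegral_prod_right'
  rw [resampledEnergy, ← hmp.lintegral_comp hm1,
    ← Function.comp_def (fun x => ∫⁻ y, ‖f (∑ i, x i) - f (∑ i, S.piecewise y x i)‖ₑ ^ 2
      ∂Measure.pi μs), lintegral_prod _ (hm1.comp hmp.measurable).aemeasurable,
    ← lintegral_const_mul' _ _ ENNReal.ofNat_ne_top]
  refine lintegral_congr fun w => ?_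
  have hg : Measurable fun z => f (∑ i ∈ Sᶜ, w i + z) := by fun_prop
  have hS := measurable_sum_coord (d := d) S
  rw [← lintegral_lintegral_enorm_sub_sq hg]
  have hg2 : Measurable fun p : EuclideanSpace ℝ (Fin d) × EuclideanSpace ℝ (Fin d) =>
    ‖f (∑ i ∈ Sᶜ, w i + p.1) - f (∑ i ∈ Sᶜ, w i + p.2)‖ₑ ^ 2 := by fun_prop
  rw [convOver, lintegral_map hg2.lintegral_prod_right' hS]
  refine lintegral_congr fun x => ?_
  rw [lintegral_map (by fun_prop) hS]
  refine lintegral_congr fun y => ?_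
  simp only [hpw, sum_piecewise_eq_compl_add]

/-- A Poincaré inequality for the convolution over `S` bounds the resampled energy. -/
lemma resampledEnergy_le_of_poincare (hf : LocallyLipschitz f) (S : Finset (Fin n)) {C : ℝ≥0∞}
    (hC : ∀ g : EuclideanSpace ℝ (Fin d) → ℝ, LocallyLipschitz g →
      evariance g (convOver μs S) ≤ C * ∫⁻ x, ‖gradient g x‖₊ ^ 2 ∂convOver μs S) :
    resampledEnergy μs (fun x => f (∑ i, x i)) S ≤
      2 * (C * ∫⁻ x, ‖gradient f x‖₊ ^ 2 ∂convOver μs Finset.univ) := by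
  have hmp := measurePreserving_resample μs S
  have hG : Measurable fun x => (‖gradient f x‖₊ : ℝ≥0∞) ^ 2 :=
    (measurable_gradient f).nnnorm.coe_nnreal_ennreal.pow_const 2
  have hS := measurable_sum_coord (d := d) S
  have hU := measurable_sum_coord (d := d) (Finset.univ : Finset (Fin n))
  have hm : Measurable fun p : (Fin n → EuclideanSpace ℝ (Fin d)) ×
      (Fin n → EuclideanSpace ℝ (Fin d)) =>
      (‖gradient f (∑ i ∈ Sᶜ, p.1 i + ∑ i ∈ S, p.2 i)‖₊ : ℝ≥0∞) ^ 2 :=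
    hG.comp (by fun_prop)
  rw [resampledEnergy_comp_sum hf.continuous.measurable]
  gcongr
  calc ∫⁻ w, evariance (fun z => f (∑ i ∈ Sᶜ, w i + z)) (convOver μs S) ∂Measure.pi μs
      ≤ ∫⁻ w, C * ∫⁻ x, (‖gradient f (∑ i ∈ Sᶜ, w i + ∑ i ∈ S, x i)‖₊ : ℝ≥0∞) ^ 2
          ∂Measure.pi μs ∂Measure.pi μs := by
        refine lintegral_mono fun w => ?_
        have hl : LocallyLipschitz fun z => f (∑ i ∈ Sᶜ, w i + z) :=
          hf.comp (isometry_add_left (∑ i ∈ Sᶜ, w i)).lipschitz.locallyLipschitz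
        refine (hC _ hl).trans_eq ?_
        simp_rw [gradient_comp_add_left]
        have hw : Measurable fun x => (‖gradient f (∑ i ∈ Sᶜ, w i + x)‖₊ : ℝ≥0∞) ^ 2 :=
          hG.comp (measurable_const_add _)
        rw [convOver, lintegral_map hw hS]
    _ = C * ∫⁻ p, (‖gradient f (∑ i ∈ Sᶜ, p.1 i + ∑ i ∈ S, p.2 i)‖₊ : ℝ≥0∞) ^ 2
          ∂(Measure.pi μs).prod (Measure.pi μs) := by
        rw [lintegral_const_mul _ hm.lintegral_prod_right', lintegral_prod _ hm.aemeasurable]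
    _ = C * ∫⁻ x, ‖gradient f x‖₊ ^ 2 ∂convOver μs Finset.univ := by
        have h := hmp.lintegral_comp (hG.comp hU)
        simp only [Function.comp_apply] at h
        rw [convOver, lintegral_map hG hU, ← h]
        simp only [sum_piecewise_eq_compl_add]

lemma poincareConst_convOver_univ_le (𝒞 : Finset (Finset (Fin n))) (t : ℕ) (ht1 : 1 ≤ t)
    (ht : ∀ i, t ≤ (𝒞.filter fun S => i ∈ S).card) (C : Finset (Fin n) → ℝ≥0∞)
    (hC : ∀ S ∈ 𝒞, ∀ g : EuclideanSpace ℝ (Fin d) → ℝ, LocallyLipschitz g →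
      evariance g (convOver μs S) ≤ C S * ∫⁻ x, ‖gradient g x‖₊ ^ 2 ∂convOver μs S) :
    poincareConst (convOver μs Finset.univ) ≤ (1 / (t : ℝ≥0∞)) * ∑ S ∈ 𝒞, C S := by
  refine sInf_le fun f hf => ?_
  have hfm := hf.continuous.measurable
  have ht0 : (t : ℝ≥0∞) ≠ 0 := by exact_mod_cast (Nat.pos_of_ne_zero (by omega)).ne'
  have h := mul_resampledEnergy_le (μ := μs) (F := fun x => f (∑ i, x i)) (by fun_prop) 𝒞 t ht
  have h2 := h.trans (Finset.sum_le_sum fun S hS => resampledEnergy_le_of_poincare hf S (hC S hS))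
  rw [← Finset.mul_sum, ← Finset.sum_mul, resampledEnergy_comp_sum hfm, mul_left_comm] at h2
  have h3 := (ENNReal.mul_le_mul_iff_right two_ne_zero ENNReal.ofNat_ne_top).1 h2
  simp only [Finset.compl_univ, Finset.sum_empty, zero_add, lintegral_const, measure_univ,
    mul_one] at h3
  rw [one_div, mul_assoc, mul_comm (t : ℝ≥0∞)⁻¹, ← div_eq_mul_inv,
    ENNReal.le_div_iff_mul_le (.inl ht0) (.inl (ENNReal.natCast_ne_top t)), mul_comm]
  exact h3

/-- A finite Poincaré constant is a limit of constants admissible in the Poincaré inequality. -/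
lemma exists_seq_poincare_tendsto {ν : Measure (EuclideanSpace ℝ (Fin d))}
    (h : poincareConst ν ≠ ∞) :
    ∃ u : ℕ → ℝ≥0∞, Filter.Tendsto u Filter.atTop (nhds (poincareConst ν)) ∧
      ∀ m, ∀ g : EuclideanSpace ℝ (Fin d) → ℝ, LocallyLipschitz g →
        evariance g ν ≤ u m * ∫⁻ x, ‖gradient g x‖₊ ^ 2 ∂ν := by
  have hne : {C : ℝ≥0∞ | ∀ f : EuclideanSpace ℝ (Fin d) → ℝ, LocallyLipschitz f →
      evariance f ν ≤ C * ∫⁻ x, ‖gradient f x‖₊ ^ 2 ∂ν}.Nonempty := by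
    by_contra hE
    exact h (by rw [poincareConst, Set.not_nonempty_iff_eq_empty.1 hE, sInf_empty])
  obtain ⟨u, -, hu, hmem⟩ := exists_seq_tendsto_sInf hne (OrderBot.bddBelow _)
  exact ⟨u, hu, hmem⟩

end Convolution


/-- Shearer-type inequality for the Poincaré constant of convolutions: for any collection `𝒞`
of distinct subsets of `[n]` with `t := min_{i ∈ [n]} #{S ∈ 𝒞 : i ∈ S} ≥ 1`,
`C_p(μ_{[n]}) ≤ (1/t) ∑_{S ∈ 𝒞} C_p(μ_S)`. -/
theorem poincareConst_conv_shearer {d n : ℕ}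
    (μs : Fin n → Measure (EuclideanSpace ℝ (Fin d))) [∀ i, IsProbabilityMeasure (μs i)]
    (𝒞 : Finset (Finset (Fin n))) (t : ℕ)
    (ht : t = ⨅ i : Fin n, (𝒞.filter fun S => i ∈ S).card) (ht1 : 1 ≤ t) :
    poincareConst (convOver μs Finset.univ) ≤
      (1 / (t : ℝ≥0∞)) * ∑ S ∈ 𝒞, poincareConst (convOver μs S) := by
  have ht' : ∀ i, t ≤ (𝒞.filter fun S => i ∈ S).card := fun i =>
    ht ▸ ciInf_le (OrderBot.bddBelow _) i
  by_cases hfin : ∀ S ∈ 𝒞, poincareConst (convOver μs S) ≠ ∞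
  · choose! u hu hC using fun S hS => exists_seq_poincare_tendsto (hfin S hS)
    have hlim := ENNReal.Tendsto.const_mul (a := 1 / (t : ℝ≥0∞))
      (tendsto_finsetSum 𝒞 fun S hS => hu S hS)
      (.inr (by simp [Nat.one_le_iff_ne_zero.1 ht1]))
    exact ge_of_tendsto' hlim fun m =>
      poincareConst_convOver_univ_le 𝒞 t ht1 ht' (fun S => u S m) fun S hS => hC S hS m
  · push Not at hfin
    rw [ENNReal.sum_eq_top.2 hfin, ENNReal.mul_top (by simp)]
    exact le_top
end

section
/- Let (X_i) be i.i.d. random vectors in ℝ^d with law ν_1, and for n ≥ 1 let ν_n denote the law of the standardized sum (1/√n) Σ_{i=1}^n X_i. Then for every n ≥ 2, C_p(ν_n) ≤ C_p(ν_{n−1}); that is, the Poincaré constant is non-increasing along the central limit theorem. -/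
open MeasureTheory ProbabilityTheory ENNReal

/-- The law of the standardized sum `(1/√n) ∑_{i=1}^n X_i` of `n` i.i.d. random vectors with
common law `ν₁`. -/
noncomputable def stdSumLaw {d : ℕ} (ν₁ : Measure (EuclideanSpace ℝ (Fin d))) (n : ℕ) :
    Measure (EuclideanSpace ℝ (Fin d)) :=
  Measure.map (fun x : Fin n → EuclideanSpace ℝ (Fin d) => (Real.sqrt n)⁻¹ • ∑ i, x i)
    (Measure.pi fun _ : Fin n => ν₁)

open Filter Topology

/-- Bessel's inequality for the projections of `F` onto a pairwise independent family. -/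
lemma card_mul_le_variance {Ω ι : Type*} [MeasurableSpace Ω] [Fintype ι] {P : Measure Ω}
    [IsProbabilityMeasure P] {F : Ω → ℝ} {Z : ι → Ω → ℝ} {v : ℝ} (hF : MemLp F 2 P)
    (hZ : ∀ i, MemLp (Z i) 2 P) (hind : Pairwise fun i j => IndepFun (Z i) (Z j) P)
    (hv : ∀ i, Var[Z i; P] = v) (hcov : ∀ i, cov[F, Z i; P] = v) :
    Fintype.card ι * v ≤ Var[F; P] := by
  have hsum : Var[∑ i, Z i; P] = Fintype.card ι * v := by
    rw [IndepFun.variance_sum (fun i _ => hZ i) fun i _ j _ hij => hind hij]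
    simp [hv]
  have hcs : cov[F, ∑ i, Z i; P] = Fintype.card ι * v := by
    rw [covariance_sum_right hZ hF]
    simp [hcov]
  have h := variance_nonneg (F - ∑ i, Z i) P
  rw [variance_sub hF (memLp_finsetSum' _ fun i _ => hZ i), hsum, hcs] at h
  linarith

lemma abs_integral_prodMk_le {α β : Type*} [MeasurableSpace β] {ν : Measure β}
    [IsProbabilityMeasure ν] {h : α × β → ℝ} {M : ℝ} (hM : ∀ p, |h p| ≤ M) (x : α) :
    |∫ y, h (x, y) ∂ν| ≤ M := by
  have := norm_integral_le_of_norm_le_const (μ := ν) (f := fun y => h (x, y)) (C := M)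
    (ae_of_all _ fun y => by simpa using hM (x, y))
  simpa using this

section Product

variable {α β : Type*} [MeasurableSpace α] [MeasurableSpace β] {μ : Measure α} {ν : Measure β}
  [IsProbabilityMeasure μ] [IsProbabilityMeasure ν] {h : α × β → ℝ} {M : ℝ}

lemma memLp_of_measurable_of_abs_le {f : α → ℝ} (hf : Measurable f) (hM : ∀ x, |f x| ≤ M)
    (p : ℝ≥0∞) : MemLp f p μ :=
  MemLp.of_bound hf.aestronglyMeasurable M (ae_of_all _ fun x => by simpa using hM x)

lemma measurable_integral_prodMk (hh : Measurable h) :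
    Measurable fun x => ∫ y, h (x, y) ∂ν :=
  hh.stronglyMeasurable.integral_prod_right'.measurable

lemma covariance_integral_prodMk (hh : Measurable h) (hM : ∀ p, |h p| ≤ M) :
    cov[h, fun p => ∫ y, h (p.1, y) ∂ν; μ.prod ν] = Var[fun x => ∫ y, h (x, y) ∂ν; μ] := by
  have hG := measurable_integral_prodMk (ν := ν) hh
  have hGM := abs_integral_prodMk_le (ν := ν) hM
  have hhL := memLp_of_measurable_of_abs_le (μ := μ.prod ν) hh hM 2
  have hGL := memLp_of_measurable_of_abs_le (μ := μ) hG hGM 2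
  have hGL' : MemLp (fun p : α × β => ∫ y, h (p.1, y) ∂ν) 2 (μ.prod ν) :=
    memLp_of_measurable_of_abs_le (hG.comp measurable_fst) (fun p => hGM p.1) 2
  have e1 : ∫ p, ∫ y, h (p.1, y) ∂ν ∂μ.prod ν = ∫ x, ∫ y, h (x, y) ∂ν ∂μ := by
    rw [integral_prod _ (hGL'.integrable one_le_two)]
    simp
  have e2 : ∫ p, h p ∂μ.prod ν = ∫ x, ∫ y, h (x, y) ∂ν ∂μ :=
    integral_prod _ (hhL.integrable one_le_two)
  have e3 : ∫ p, h p * ∫ y, h (p.1, y) ∂ν ∂μ.prod ν = ∫ x, (∫ y, h (x, y) ∂ν) ^ 2 ∂μ := by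
    rw [integral_prod (fun p => h p * ∫ y, h (p.1, y) ∂ν) (hhL.integrable_mul hGL')]
    simp [integral_mul_const, sq]
  rw [covariance_eq_sub hhL hGL', variance_eq_sub hGL]
  simp only [Pi.mul_apply, Pi.pow_apply]
  rw [e1, e2, e3]
  ring

/-- The law of total variance. -/
lemma lintegral_evariance_prodMk (hh : Measurable h) (hM : ∀ p, |h p| ≤ M) :
    ∫⁻ x, evariance (fun y => h (x, y)) ν ∂μ =
      ENNReal.ofReal (Var[h; μ.prod ν] - Var[fun x => ∫ y, h (x, y) ∂ν; μ]) := by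
  have hG := measurable_integral_prodMk (ν := ν) hh
  have hGM := abs_integral_prodMk_le (ν := ν) hM
  have hhL := memLp_of_measurable_of_abs_le (μ := μ.prod ν) hh hM 2
  have hGL' : MemLp (fun p : α × β => ∫ y, h (p.1, y) ∂ν) 2 (μ.prod ν) :=
    memLp_of_measurable_of_abs_le (hG.comp measurable_fst) (fun p => hGM p.1) 2
  have e1 : ∫ p, (h p - ∫ y, h (p.1, y) ∂ν) ∂μ.prod ν = 0 := by
    rw [integral_sub (hhL.integrable one_le_two) (hGL'.integrable one_le_two),
      integral_prod _ (hhL.integrable one_le_two), integral_prod _ (hGL'.integrable one_le_two)]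
    simp
  have e2 : Var[fun p => ∫ y, h (p.1, y) ∂ν; μ.prod ν] = Var[fun x => ∫ y, h (x, y) ∂ν; μ] :=
    measurePreserving_fst.variance_fun_comp hG.aemeasurable
  have e3 : Var[h; μ.prod ν] - Var[fun x => ∫ y, h (x, y) ∂ν; μ] =
      Var[fun p => h p - ∫ y, h (p.1, y) ∂ν; μ.prod ν] := by
    rw [variance_fun_sub hhL hGL', covariance_integral_prodMk hh hM, e2]
    ring
  have hm : Measurable fun p : α × β => (h p - ∫ y, h (p.1, y) ∂ν - 0) ^ 2 :=
    ((hh.sub (hG.comp measurable_fst)).sub_const 0).pow_const 2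
  rw [e3, ofReal_variance (X := fun p => h p - ∫ y, h (p.1, y) ∂ν) (hhL.sub hGL'),
    evariance_eq_lintegral_ofReal, e1,
    lintegral_prod _ hm.ennreal_ofReal.aemeasurable]
  simp [evariance_eq_lintegral_ofReal]

end Product

section Truncation

/-- Lower semicontinuity of the variance along truncations. -/
lemma evariance_le_of_forall_truncation {α : Type*} [MeasurableSpace α] {μ : Measure α}
    [IsProbabilityMeasure μ] {f : α → ℝ} (hf : Measurable f) {K : ℝ≥0∞}
    (hK : ∀ M : ℕ, evariance (fun x => max (-(M : ℝ)) (min (f x) M)) μ ≤ K) :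
    evariance f μ ≤ K := by
  rcases eq_or_ne K ∞ with rfl | hKtop
  · exact le_top
  set T : ℕ → α → ℝ := fun M x => max (-(M : ℝ)) (min (f x) M) with hT
  have hTm : ∀ M, Measurable (T M) := fun M => by fun_prop
  have hTf : ∀ x, ∀ᶠ M in atTop, T M x = f x := fun x => by
    filter_upwards [eventually_ge_atTop ⌈|f x|⌉₊] with M hM
    have := (Nat.ceil_le.mp hM)
    rw [abs_le] at this
    simp [hT, this.1, this.2]
  have hfatou : ∀ φ : ℕ → ℕ,
      ∫⁻ x, liminf (fun k => ‖T (φ k) x - ∫ y, T (φ k) y ∂μ‖ₑ ^ 2) atTop ∂μ ≤ K := fun φ => by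
    refine (lintegral_liminf_le fun k => by fun_prop).trans ?_
    refine liminf_le_of_frequently_le' (Frequently.of_forall fun k => hK (φ k))
  by_cases hbdd : Tendsto (fun M => |∫ y, T M y ∂μ|) atTop atTop
  · exfalso
    have htop : ∀ x, liminf (fun k => ‖T k x - ∫ y, T k y ∂μ‖ₑ ^ 2) atTop = ∞ := fun x => by
      refine Tendsto.liminf_eq ?_
      have h1 : Tendsto (fun k => |∫ y, T k y ∂μ| - |f x|) atTop atTop :=
        tendsto_atTop_add_const_right _ _ hbdd
      have h2 := (tendsto_pow_atTop (two_ne_zero)).comp h1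
      have h3 := tendsto_ofReal_atTop.comp h2
      refine tendsto_nhds_top_mono h3 ?_
      filter_upwards [hTf x, h1.eventually_ge_atTop 0] with k hk hk0
      simp only [Function.comp, hk]
      rw [ENNReal.ofReal_pow hk0, ← ofReal_norm]
      gcongr
      rw [norm_sub_rev]
      exact norm_sub_norm_le (∫ y, T k y ∂μ) (f x)
    have := hfatou id
    simp only [id, htop, lintegral_const, measure_univ, mul_one, top_le_iff] at this
    exact hKtop this
  · have hfr : ∃ b, ∃ᶠ M in atTop, (∫ y, T M y ∂μ) ∈ Metric.closedBall (0 : ℝ) b := by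
      obtain ⟨b, hb⟩ := not_forall.mp (mt tendsto_atTop.mpr hbdd)
      refine ⟨b, (not_eventually.mp hb).mono fun M hM => ?_⟩
      simpa using (not_le.mp hM).le
    obtain ⟨b, hb⟩ := hfr
    obtain ⟨m, -, φ, hφ, hm⟩ := tendsto_subseq_of_frequently_bounded Metric.isBounded_closedBall hb
    have hle : ∫⁻ x, ‖f x - m‖ₑ ^ 2 ∂μ ≤ K := by
      refine le_trans (lintegral_mono fun x => ?_) (hfatou φ)
      refine (Tendsto.liminf_eq ?_).ge
      have h1 : Tendsto (fun k => T (φ k) x) atTop (𝓝 (f x)) :=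
        tendsto_const_nhds.congr' ((hφ.tendsto_atTop.eventually (hTf x)).mono fun k hk => hk.symm)
      exact ((ENNReal.continuous_pow 2).tendsto _).comp (h1.sub hm).enorm
    have hfm : AEStronglyMeasurable (fun x => f x - m) μ := by fun_prop
    have hsub : evariance (fun x => f x - m) μ ≤ K := by
      rw [evariance_def' hfm]
      exact tsub_le_self.trans hle
    have hL : MemLp (fun x => f x - m) 2 μ :=
      (evariance_lt_top_iff_memLp hfm).mp (hsub.trans_lt hKtop.lt_top)
    have hL' : MemLp f 2 μ := by
      convert hL.add (memLp_const m) using 1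
      ext x; simp
    rw [← ofReal_variance hL']
    rw [← ofReal_variance hL, variance_sub_const hf.aestronglyMeasurable] at hsub
    exact hsub

variable {E : Type*} [NormedAddCommGroup E] [InnerProductSpace ℝ E] [CompleteSpace E]

lemma nnnorm_gradient (f : E → ℝ) (x : E) : ‖gradient f x‖₊ = ‖fderiv ℝ f x‖₊ := by
  simp [gradient]

lemma nnnorm_gradient_truncation_le {f : E → ℝ} (hf : Continuous f) {M : ℝ} (hM : 0 ≤ M) (x : E) :
    ‖gradient (fun x => max (-M) (min (f x) M)) x‖₊ ≤ ‖gradient f x‖₊ := by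
  rw [nnnorm_gradient, nnnorm_gradient]
  rcases le_or_gt M (f x) with h1 | h1
  · have : IsLocalMax (fun x => max (-M) (min (f x) M)) x := .of_forall fun y => by
      simp only [min_eq_right h1, max_eq_right (neg_le_self hM)]
      exact max_le (neg_le_self hM) (min_le_right _ _)
    simp [this.fderiv_eq_zero]
  rcases le_or_gt (f x) (-M) with h2 | h2
  · have : IsLocalMin (fun x => max (-M) (min (f x) M)) x := .of_forall fun y => by
      simp only [max_eq_left ((min_le_left _ _).trans h2)]
      exact le_max_left _ _
    simp [this.fderiv_eq_zero]
  · refine le_of_eq (congrArg _ (EventuallyEq.fderiv_eq ?_))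
    filter_upwards [hf.continuousAt.eventually_lt_const h1,
      hf.continuousAt.eventually_const_lt h2] with y h3 h4
    rw [min_eq_left h3.le, max_eq_right h4.le]

lemma nnnorm_gradient_comp_affine (f : E → ℝ) (b : E) (a : ℝ) (y : E) :
    ‖gradient (fun y => f (b + a • y)) y‖₊ = ‖a‖₊ * ‖gradient f (b + a • y)‖₊ := by
  rw [nnnorm_gradient, nnnorm_gradient, fderiv_comp_smul (f := fun z => f (b + z)),
    fderiv_comp_add_left, nnnorm_smul]

lemma measurable_nnnorm_gradient [MeasurableSpace E] [BorelSpace E] (f : E → ℝ) :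
    Measurable fun x => ‖gradient f x‖₊ := by
  simp_rw [nnnorm_gradient]
  exact (measurable_fderiv ℝ f).nnnorm

/-- A Poincaré inequality for `μ` is inherited by the functions `y ↦ f (b + a • y)`. -/
lemma evariance_comp_affine_le [MeasurableSpace E] [BorelSpace E] {μ : Measure E} {C : ℝ≥0∞}
    (hC : ∀ f : E → ℝ, LocallyLipschitz f → evariance f μ ≤ C * ∫⁻ x, ‖gradient f x‖₊ ^ 2 ∂μ)
    {f : E → ℝ} (hf : LocallyLipschitz f) (b : E) (a : ℝ) :
    evariance (fun y => f (b + a • y)) μ ≤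
      C * (‖a‖ₑ ^ 2 * ∫⁻ y, ‖gradient f (b + a • y)‖₊ ^ 2 ∂μ) := by
  have hlip : LocallyLipschitz fun y => f (b + a • y) :=
    hf.comp ((LipschitzWith.const b).add (lipschitzWith_smul a)).locallyLipschitz
  refine (hC _ hlip).trans_eq ?_
  have hmeas : Measurable fun y => (‖gradient f (b + a • y)‖₊ : ℝ≥0∞) ^ 2 :=
    ((measurable_nnnorm_gradient f).coe_nnreal_ennreal.pow_const 2).comp
      ((continuous_const_smul a).const_add b).measurable
  rw [← lintegral_const_mul _ hmeas]
  simp_rw [nnnorm_gradient_comp_affine, ENNReal.coe_mul, mul_pow]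
  rfl

end Truncation

section StdSum

variable {d : ℕ} (ν₁ : Measure (EuclideanSpace ℝ (Fin d))) [IsProbabilityMeasure ν₁]

lemma measurable_stdSum (n : ℕ) : Measurable fun x : Fin n → EuclideanSpace ℝ (Fin d) =>
    (Real.sqrt n)⁻¹ • ∑ i, x i := by
  fun_prop

instance isProbabilityMeasure_stdSumLaw (n : ℕ) : IsProbabilityMeasure (stdSumLaw ν₁ n) :=
  Measure.isProbabilityMeasure_map (measurable_stdSum n).aemeasurable

lemma measurePreserving_eval_stdSum_removeNth (m : ℕ) (i : Fin (m + 1)) :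
    MeasurePreserving (fun x : Fin (m + 1) → EuclideanSpace ℝ (Fin d) =>
      (x i, (Real.sqrt m)⁻¹ • ∑ j, x (i.succAbove j)))
      (Measure.pi fun _ => ν₁) (ν₁.prod (stdSumLaw ν₁ m)) := by
  have h := (MeasurePreserving.id ν₁).prod
    ((measurable_stdSum (d := d) m).measurePreserving (Measure.pi fun _ : Fin m => ν₁))
  exact h.comp (measurePreserving_piFinSuccAbove (fun _ => ν₁) i)

lemma stdSum_eq_add (m : ℕ) (hm : m ≠ 0) (i : Fin (m + 1))
    (x : Fin (m + 1) → EuclideanSpace ℝ (Fin d)) :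
    (Real.sqrt (m + 1 : ℕ))⁻¹ • ∑ j, x j = (Real.sqrt (m + 1 : ℕ))⁻¹ • x i +
      (Real.sqrt m / Real.sqrt (m + 1 : ℕ)) • (Real.sqrt m)⁻¹ • ∑ j, x (i.succAbove j) := by
  have : Real.sqrt m ≠ 0 := by positivity
  rw [Fin.sum_univ_succAbove x i, smul_add, smul_smul]
  congr 2
  field_simp

lemma measurePreserving_add_stdSumLaw (m : ℕ) (hm : m ≠ 0) :
    MeasurePreserving (fun p : EuclideanSpace ℝ (Fin d) × EuclideanSpace ℝ (Fin d) =>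
      (Real.sqrt (m + 1 : ℕ))⁻¹ • p.1 + (Real.sqrt m / Real.sqrt (m + 1 : ℕ)) • p.2)
      (ν₁.prod (stdSumLaw ν₁ m)) (stdSumLaw ν₁ (m + 1)) := by
  refine ⟨by fun_prop, ?_⟩
  rw [← (measurePreserving_eval_stdSum_removeNth ν₁ m 0).map_eq,
    Measure.map_map (by fun_prop) (measurePreserving_eval_stdSum_removeNth ν₁ m 0).measurable,
    stdSumLaw]
  congr 1
  ext1 x
  exact (stdSum_eq_add m hm 0 x).symm

/-- The variance drop inequality for the projection onto a single summand. -/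
lemma mul_variance_integral_le (m : ℕ) (hm : m ≠ 0) {f : EuclideanSpace ℝ (Fin d) → ℝ}
    (hf : Measurable f) {M : ℝ} (hM : ∀ x, |f x| ≤ M) :
    (m + 1) * Var[fun t => ∫ y, f ((Real.sqrt (m + 1 : ℕ))⁻¹ • t +
        (Real.sqrt m / Real.sqrt (m + 1 : ℕ)) • y) ∂stdSumLaw ν₁ m; ν₁] ≤
      Var[f; stdSumLaw ν₁ (m + 1)] := by
  set h : EuclideanSpace ℝ (Fin d) × EuclideanSpace ℝ (Fin d) → ℝ := fun p =>
    f ((Real.sqrt (m + 1 : ℕ))⁻¹ • p.1 + (Real.sqrt m / Real.sqrt (m + 1 : ℕ)) • p.2)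
  have hh : Measurable h := by fun_prop
  have hhM : ∀ p, |h p| ≤ M := fun p => hM _
  set G : EuclideanSpace ℝ (Fin d) → ℝ := fun t => ∫ y, h (t, y) ∂stdSumLaw ν₁ m
  have hG : Measurable G := measurable_integral_prodMk hh
  have hGM : ∀ t, |G t| ≤ M := abs_integral_prodMk_le hhM
  have hG1 : Measurable fun p : EuclideanSpace ℝ (Fin d) × EuclideanSpace ℝ (Fin d) => G p.1 :=
    hG.comp measurable_fst
  have hS := measurable_stdSum (d := d) (m + 1)
  have key := card_mul_le_variance (P := Measure.pi fun _ : Fin (m + 1) => ν₁)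
    (F := fun x => f ((Real.sqrt (m + 1 : ℕ))⁻¹ • ∑ i, x i)) (Z := fun i x => G (x i))
    (v := Var[G; ν₁])
    (memLp_of_measurable_of_abs_le (hf.comp hS) (fun x => hM _) 2)
    (fun i => memLp_of_measurable_of_abs_le (hG.comp (measurable_pi_apply i)) (fun x => hGM _) 2)
    (fun i j hij => (iIndepFun_pi (X := fun _ => G) fun _ => hG.aemeasurable).indepFun hij)
    (fun i => (measurePreserving_eval (fun _ => ν₁) i).variance_fun_comp hG.aemeasurable)
    (fun i => by
      have hφ := measurePreserving_eval_stdSum_removeNth ν₁ m i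
      have hc : cov[h, fun p => G p.1; ν₁.prod (stdSumLaw ν₁ m)] = Var[G; ν₁] :=
        covariance_integral_prodMk hh hhM
      rw [← hφ.map_eq, covariance_map_fun hh.aestronglyMeasurable
        hG1.aestronglyMeasurable hφ.aemeasurable] at hc
      simp_rw [stdSum_eq_add m hm i]
      exact hc)
  rw [stdSumLaw, variance_map hf.aemeasurable hS.aemeasurable]
  simpa [Function.comp_def] using key

lemma evariance_stdSumLaw_succ_le_of_abs_le (m : ℕ) (hm : m ≠ 0) {C : ℝ≥0∞}
    (hC : ∀ f : EuclideanSpace ℝ (Fin d) → ℝ, LocallyLipschitz f →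
      evariance f (stdSumLaw ν₁ m) ≤ C * ∫⁻ x, ‖gradient f x‖₊ ^ 2 ∂stdSumLaw ν₁ m)
    {f : EuclideanSpace ℝ (Fin d) → ℝ} (hf : LocallyLipschitz f) {M : ℝ} (hM : ∀ x, |f x| ≤ M) :
    evariance f (stdSumLaw ν₁ (m + 1)) ≤
      C * ∫⁻ x, ‖gradient f x‖₊ ^ 2 ∂stdSumLaw ν₁ (m + 1) := by
  have hfm : Measurable f := hf.continuous.measurable
  set b : ℝ := (Real.sqrt (m + 1 : ℕ))⁻¹
  set a : ℝ := Real.sqrt m / Real.sqrt (m + 1 : ℕ) with a_def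
  set I := ∫⁻ x, (‖gradient f x‖₊ : ℝ≥0∞) ^ 2 ∂stdSumLaw ν₁ (m + 1) with I_def
  have ha : a ^ 2 = m / (m + 1) := by
    rw [a_def, div_pow, Real.sq_sqrt (by positivity), Real.sq_sqrt (by positivity)]
    push_cast; rfl
  have hgm : Measurable fun x => (‖gradient f x‖₊ : ℝ≥0∞) ^ 2 :=
    (measurable_nnnorm_gradient f).coe_nnreal_ennreal.pow_const 2
  have hS : MeasurePreserving (fun p : EuclideanSpace ℝ (Fin d) × EuclideanSpace ℝ (Fin d) =>
      b • p.1 + a • p.2) (ν₁.prod (stdSumLaw ν₁ m)) (stdSumLaw ν₁ (m + 1)) :=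
    measurePreserving_add_stdSumLaw ν₁ m hm
  have hgS : Measurable fun p : EuclideanSpace ℝ (Fin d) × EuclideanSpace ℝ (Fin d) =>
      (‖gradient f (b • p.1 + a • p.2)‖₊ : ℝ≥0∞) ^ 2 := hgm.comp hS.measurable
  have hslice := fun t => evariance_comp_affine_le hC hf (b • t) a
  have hI : ∫⁻ t, ∫⁻ y, (‖gradient f (b • t + a • y)‖₊ : ℝ≥0∞) ^ 2 ∂stdSumLaw ν₁ m ∂ν₁ = I := by
    rw [I_def, ← hS.lintegral_comp hgm, lintegral_prod _ hgS.aemeasurable]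
  have htotal := lintegral_evariance_prodMk (μ := ν₁) (ν := stdSumLaw ν₁ m)
    (hfm.comp hS.measurable) (fun p => hM _)
  have hvar := hS.variance_fun_comp hfm.aemeasurable
  have hdrop := mul_variance_integral_le ν₁ m hm hfm hM
  have hle : ENNReal.ofReal (a ^ 2) * ENNReal.ofReal Var[f; stdSumLaw ν₁ (m + 1)] ≤
      ENNReal.ofReal (a ^ 2) * (C * I) := by
    calc _ ≤ ENNReal.ofReal (Var[f; stdSumLaw ν₁ (m + 1)] -
          Var[fun t => ∫ y, f (b • t + a • y) ∂stdSumLaw ν₁ m; ν₁]) := by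
          rw [← ENNReal.ofReal_mul (sq_nonneg a)]
          refine ENNReal.ofReal_le_ofReal ?_
          rw [ha, div_mul_eq_mul_div, div_le_iff₀ (by positivity)]
          linarith
      _ = ∫⁻ t, evariance (fun y => f (b • t + a • y)) (stdSumLaw ν₁ m) ∂ν₁ := by
          rw [← hvar]
          exact htotal.symm
      _ ≤ ∫⁻ t, C * (‖a‖ₑ ^ 2 * ∫⁻ y, ‖gradient f (b • t + a • y)‖₊ ^ 2 ∂stdSumLaw ν₁ m) ∂ν₁ :=
          lintegral_mono hslice
      _ = ENNReal.ofReal (a ^ 2) * (C * I) := by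
          have hmeas : Measurable fun t =>
              ∫⁻ y, (‖gradient f (b • t + a • y)‖₊ : ℝ≥0∞) ^ 2 ∂stdSumLaw ν₁ m :=
            hgS.lintegral_prod_right'
          have ha' : ENNReal.ofReal (a ^ 2) = ‖a‖ₑ ^ 2 := by
            rw [← enorm_pow, Real.enorm_of_nonneg (sq_nonneg a)]
          rw [lintegral_const_mul _ (hmeas.const_mul _), lintegral_const_mul _ hmeas, hI, ha']
          ring
  rw [← ofReal_variance (memLp_of_measurable_of_abs_le hfm hM 2)]
  refine (ENNReal.mul_le_mul_iff_right ?_ ENNReal.ofReal_ne_top).mp hle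
  rw [ha]
  positivity

lemma evariance_stdSumLaw_succ_le (m : ℕ) (hm : m ≠ 0) {C : ℝ≥0∞}
    (hC : ∀ f : EuclideanSpace ℝ (Fin d) → ℝ, LocallyLipschitz f →
      evariance f (stdSumLaw ν₁ m) ≤ C * ∫⁻ x, ‖gradient f x‖₊ ^ 2 ∂stdSumLaw ν₁ m)
    {f : EuclideanSpace ℝ (Fin d) → ℝ} (hf : LocallyLipschitz f) :
    evariance f (stdSumLaw ν₁ (m + 1)) ≤
      C * ∫⁻ x, ‖gradient f x‖₊ ^ 2 ∂stdSumLaw ν₁ (m + 1) := by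
  refine evariance_le_of_forall_truncation hf.continuous.measurable fun M => ?_
  have hM : (0 : ℝ) ≤ M := M.cast_nonneg
  refine (evariance_stdSumLaw_succ_le_of_abs_le ν₁ m hm hC
    ((hf.min_const M).const_max (-M)) (M := M) fun x => ?_).trans ?_
  · exact abs_le.mpr ⟨le_max_left _ _, max_le (neg_le_self hM) (min_le_right _ _)⟩
  · gcongr with x
    exact nnnorm_gradient_truncation_le hf.continuous hM x

end StdSum

/-- The Poincaré constant is non-increasing along the central limit theorem:
for i.i.d. random vectors `X_i ~ ν₁` and `ν_n` the law of `(1/√n) ∑_{i=1}^n X_i`,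
one has `C_p(ν_n) ≤ C_p(ν_{n-1})` for every `n ≥ 2`. -/
theorem poincareConst_stdSumLaw_antitone {d : ℕ} (ν₁ : Measure (EuclideanSpace ℝ (Fin d)))
    [IsProbabilityMeasure ν₁] (n : ℕ) (hn : 2 ≤ n) :
    poincareConst (stdSumLaw ν₁ n) ≤ poincareConst (stdSumLaw ν₁ (n - 1)) := by
  obtain ⟨m, rfl⟩ : ∃ m, n = m + 1 := ⟨n - 1, by omega⟩
  exact sInf_le_sInf fun C hC f hf => evariance_stdSumLaw_succ_le ν₁ m (by omega) hC hf
end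

section
/- Let μ, ν be Borel probability measures on ℝ^d with finite second moments and finite Poincaré constants C_p(μ), C_p(ν), and set σ² := σ²(μ ⋆ ν). Then C_p(μ ⋆ ν) ≤ (C_p(μ) + C_p(ν)) − [C_p(μ) C_p(ν) / (C_p(μ) + C_p(ν))] · (C_p(μ⋆ν) − σ²)² / ((C_p(μ⋆ν) − σ²)² + C_p(μ⋆ν) σ²). -/
open MeasureTheory ProbabilityTheory ENNReal
open scoped RealInnerProductSpace

/-- `σ²(μ) := max_{|α| = 1} Var_μ(x ↦ α·x)`, the largest variance of `μ` in any direction. -/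
noncomputable def maxDirVar {d : ℕ} (μ : Measure (EuclideanSpace ℝ (Fin d))) : ℝ :=
  ⨆ α : {a : EuclideanSpace ℝ (Fin d) // ‖a‖ = 1},
    variance (fun x => ⟪(α : EuclideanSpace ℝ (Fin d)), x⟫) μ


section Pointwise

open Filter Topology

variable {E : Type*} [NormedAddCommGroup E] [NormedSpace ℝ E]

/-- Bounded and globally Lipschitz real-valued functions. -/
def BddLipschitz {X : Type*} [PseudoMetricSpace X] (f : X → ℝ) : Prop :=
  (∃ K, LipschitzWith K f) ∧ ∃ M, ∀ x, |f x| ≤ M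

theorem BddLipschitz.continuous {X : Type*} [PseudoMetricSpace X] {f : X → ℝ}
    (hf : BddLipschitz f) : Continuous f := by
  obtain ⟨⟨K, hK⟩, -⟩ := hf
  exact hK.continuous

theorem BddLipschitz.add {X : Type*} [PseudoMetricSpace X] {f g : X → ℝ}
    (hf : BddLipschitz f) (hg : BddLipschitz g) : BddLipschitz (f + g) := by
  obtain ⟨⟨K, hK⟩, M, hM⟩ := hf
  obtain ⟨⟨K', hK'⟩, M', hM'⟩ := hg
  exact ⟨⟨K + K', hK.add hK'⟩, M + M', fun x => (abs_add_le _ _).trans (add_le_add (hM x) (hM' x))⟩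

theorem BddLipschitz.mul {X : Type*} [PseudoMetricSpace X] {f g : X → ℝ}
    (hf : BddLipschitz f) (hg : BddLipschitz g) : BddLipschitz (fun x => f x * g x) := by
  obtain ⟨⟨K, hK⟩, M, hM⟩ := hf
  obtain ⟨⟨K', hK'⟩, M', hM'⟩ := hg
  refine ⟨⟨K * M'.toNNReal + M.toNNReal * K', ?_⟩, M * M', fun x => ?_⟩
  · refine LipschitzWith.of_dist_le_mul fun x y => ?_
    have hM0 : 0 ≤ M := (abs_nonneg _).trans (hM x)
    have hM0' : 0 ≤ M' := (abs_nonneg _).trans (hM' x)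
    have h1 := hK.dist_le_mul x y
    have h2 := hK'.dist_le_mul x y
    rw [Real.dist_eq] at h1 h2 ⊢
    have : f x * g x - f y * g y = (f x - f y) * g x + f y * (g x - g y) := by ring
    rw [this]
    refine (abs_add_le _ _).trans ?_
    rw [abs_mul, abs_mul]
    push_cast
    simp only [Real.coe_toNNReal _ hM0, Real.coe_toNNReal _ hM0']
    have h3 := mul_le_mul h1 (hM' x) (abs_nonneg _) (by positivity)
    have h4 := mul_le_mul (hM y) h2 (abs_nonneg _) hM0
    linarith
  · rw [abs_mul]
    exact mul_le_mul (hM x) (hM' x) (abs_nonneg _) ((abs_nonneg _).trans (hM x))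

theorem BddLipschitz.smul {X : Type*} [PseudoMetricSpace X] {f : X → ℝ}
    (hf : BddLipschitz f) (c : ℝ) : BddLipschitz (c • f) := by
  have hc : BddLipschitz (fun _ : X => c) := ⟨⟨0, LipschitzWith.const c⟩, |c|, fun _ => le_rfl⟩
  exact hc.mul hf

theorem BddLipschitz.comp_add_right {E : Type*} [SeminormedAddCommGroup E] {f : E → ℝ}
    (hf : BddLipschitz f) (y : E) :
    BddLipschitz (fun x => f (x + y)) := by
  obtain ⟨⟨K, hK⟩, M, hM⟩ := hf
  exact ⟨⟨K, LipschitzWith.of_dist_le_mul fun a b => by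
    simpa using hK.dist_le_mul (a + y) (b + y)⟩, M, fun x => hM _⟩

theorem BddLipschitz.comp_add_left {E : Type*} [SeminormedAddCommGroup E] {f : E → ℝ}
    (hf : BddLipschitz f) (y : E) :
    BddLipschitz (fun x => f (y + x)) := by
  simpa only [add_comm] using hf.comp_add_right y

/-- Truncation of a real function to values in `[-M, M]` does not increase the norm of `fderiv`. -/
theorem norm_fderiv_truncate_le {f : E → ℝ} (hf : Continuous f) {M : ℝ} (hM : 0 < M) (x : E) :
    ‖fderiv ℝ (fun y => max (min (f y) M) (-M)) x‖ ≤ ‖fderiv ℝ f x‖ := by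
  rcases lt_or_ge |f x| M with h | h
  · have hev : (fun y => max (min (f y) M) (-M)) =ᶠ[𝓝 x] f := by
      filter_upwards [(hf.abs.tendsto x).eventually (gt_mem_nhds h)] with y hy
      rw [abs_lt] at hy
      rw [min_eq_left hy.2.le, max_eq_left hy.1.le]
    rw [hev.fderiv_eq]
  · suffices fderiv ℝ (fun y => max (min (f y) M) (-M)) x = 0 by simp [this]
    rcases le_abs'.1 h with h | h
    · refine IsLocalMin.fderiv_eq_zero (Eventually.of_forall fun y => ?_)
      have : max (min (f x) M) (-M) = -M := max_eq_right ((min_le_left _ _).trans h)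
      simp only [this]
      exact le_max_right _ _
    · refine IsLocalMax.fderiv_eq_zero (Eventually.of_forall fun y => ?_)
      have : max (min (f x) M) (-M) = M := by rw [min_eq_right h, max_eq_left (by linarith)]
      simp only [this]
      exact max_le (min_le_right _ _) (by linarith)

/-- Leibniz bound for a cutoff, valid also at points where `f` is not differentiable. -/
theorem norm_fderiv_mul_cutoff_le {f χ : E → ℝ} {M δ : ℝ} (hfM : ∀ x, |f x| ≤ M)
    (hχ : Differentiable ℝ χ) (hχ0 : ∀ x, 0 ≤ χ x) (hχ1 : ∀ x, χ x ≤ 1)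
    (hχδ : ∀ x, ‖fderiv ℝ χ x‖ ≤ δ) (x : E) :
    ‖fderiv ℝ (fun y => f y * χ y) x‖ ≤ ‖fderiv ℝ f x‖ + M * δ := by
  have hM : 0 ≤ M := (abs_nonneg _).trans (hfM x)
  have hδ : 0 ≤ δ := (norm_nonneg _).trans (hχδ x)
  have hrhs : 0 ≤ ‖fderiv ℝ f x‖ + M * δ := by positivity
  by_cases hd : DifferentiableAt ℝ f x
  · rw [fderiv_fun_mul hd (hχ x)]
    refine (norm_add_le _ _).trans ?_
    rw [norm_smul, norm_smul, Real.norm_eq_abs, Real.norm_eq_abs, abs_of_nonneg (hχ0 x), add_comm]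
    exact add_le_add (mul_le_of_le_one_left (norm_nonneg _) (hχ1 x))
      (mul_le_mul (hfM x) (hχδ x) (norm_nonneg _) hM)
  · rcases (hχ0 x).eq_or_lt with h0 | h0
    · have hχ' : fderiv ℝ χ x = 0 :=
        IsLocalMin.fderiv_eq_zero (Eventually.of_forall fun y => h0 ▸ hχ0 y)
      have hlit := (hχ x).hasFDerivAt.isLittleO
      have : HasFDerivAt (fun y => f y * χ y) (0 : E →L[ℝ] ℝ) x := by
        refine HasFDerivAt.of_isLittleO (Asymptotics.IsBigO.trans_isLittleO ?_ hlit)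
        refine Asymptotics.IsBigO.of_bound M (Eventually.of_forall fun y => ?_)
        simp only [hχ', ← h0, zero_apply, mul_zero, sub_zero, norm_mul]
        exact mul_le_mul_of_nonneg_right (hfM y) (norm_nonneg _)
      rw [this.fderiv]
      simpa using hrhs
    · rw [fderiv_zero_of_not_differentiableAt]
      · simpa using hrhs
      · intro hc
        refine hd ((hc.mul ((hχ x).inv h0.ne')).congr_of_eventuallyEq ?_)
        filter_upwards [(hχ.continuous.tendsto x).eventually (lt_mem_nhds h0)] with y hy
        simp only [Pi.mul_apply, Pi.inv_apply]
        field_simp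

/-- A locally Lipschitz bounded function times a compactly supported smooth cutoff is globally
Lipschitz. -/
theorem BddLipschitz.of_mul_cutoff [FiniteDimensional ℝ E] {f χ : E → ℝ} {M : ℝ}
    (hf : LocallyLipschitz f) (hfM : ∀ x, |f x| ≤ M) (hχ : BddLipschitz χ)
    (hχs : HasCompactSupport χ) : BddLipschitz (fun x => f x * χ x) := by
  obtain ⟨K, hK⟩ := (hf.locallyLipschitzOn (s := tsupport χ)).exists_lipschitzOnWith_of_compact hχs
  obtain ⟨g, hg, hfg⟩ := hK.extend_real
  have hG : BddLipschitz (fun x => max (min (g x) M) (-M)) := by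
    refine ⟨⟨K, (hg.min_const M).max_const (-M)⟩, |M|, fun x => abs_le.2 ⟨?_, ?_⟩⟩
    · exact (neg_le_neg (le_abs_self M)).trans (le_max_right _ _)
    · exact max_le ((min_le_right _ _).trans (le_abs_self M)) (neg_le_abs M)
  convert hG.mul hχ using 2 with x
  by_cases hx : x ∈ tsupport χ
  · have := abs_le.1 (hfM x)
    rw [← hfg hx, min_eq_left this.2, max_eq_left this.1]
  · simp [image_eq_zero_of_notMem_tsupport hx]

/-- For every `δ > 0` and every ball there is a smooth compactly supported cutoff, equal to one on
the ball, with slope at most `δ`. -/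
theorem exists_cutoff [FiniteDimensional ℝ E] :
    ∃ χ : ℕ → E → ℝ, ∃ δ : ℕ → ℝ, Tendsto δ atTop (𝓝 0) ∧ (∀ x, ∀ᶠ n in atTop, χ n x = 1) ∧
      ∀ n, Differentiable ℝ (χ n) ∧ (∀ x, 0 ≤ χ n x) ∧ (∀ x, χ n x ≤ 1) ∧
        (∀ x, ‖fderiv ℝ (χ n) x‖ ≤ δ n) ∧ HasCompactSupport (χ n) ∧ BddLipschitz (χ n) := by
  let b : ContDiffBump (0 : E) := ⟨1, 2, one_pos, one_lt_two⟩
  have hb : ContDiff ℝ 1 b := b.contDiff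
  obtain ⟨K, hK⟩ := hb.lipschitzWith_of_hasCompactSupport b.hasCompactSupport one_ne_zero
  have hL (n : ℕ) : LipschitzWith (K * ‖((n : ℝ) + 1)⁻¹‖₊)
      (fun x : E => b (((n : ℝ) + 1)⁻¹ • x)) := hK.comp (lipschitzWith_smul _)
  have hn (n : ℕ) : ((n : ℝ) + 1)⁻¹ ≠ 0 := by positivity
  refine ⟨fun n x => b (((n : ℝ) + 1)⁻¹ • x), fun n => K * ((n : ℝ) + 1)⁻¹, ?_, fun x => ?_,
    fun n => ⟨?_, fun x => b.nonneg, fun x => b.le_one, fun x => ?_, ?_, ?_⟩⟩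
  · simpa using (tendsto_one_div_add_atTop_nhds_zero_nat (𝕜 := ℝ)).const_mul (K : ℝ)
  · obtain ⟨N, hN⟩ := exists_nat_ge ‖x‖
    filter_upwards [eventually_ge_atTop N] with n hn
    refine b.one_of_mem_closedBall ?_
    rw [mem_closedBall_zero_iff, norm_smul, norm_inv, Real.norm_of_nonneg (by positivity)]
    have : (N : ℝ) ≤ n := by exact_mod_cast hn
    change _ ≤ (1 : ℝ)
    rw [inv_mul_le_iff₀ (by positivity)]
    linarith
  · exact (hb.differentiable one_ne_zero).comp (differentiable_id.const_smul _)
  · have := norm_fderiv_le_of_lipschitz ℝ (hL n) (x₀ := x)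
    simpa [abs_of_nonneg (by positivity : (0 : ℝ) ≤ n + 1)] using this
  · exact b.hasCompactSupport.comp_homeomorph (Homeomorph.smulOfNeZero _ (hn n))
  · exact ⟨⟨_, hL n⟩, 1, fun x => by rw [abs_of_nonneg b.nonneg]; exact b.le_one⟩

theorem norm_fderiv_add_smul_sq_le {f g : E → ℝ} {K K' : NNReal} (hf : LipschitzWith K f)
    (hg : LipschitzWith K' g) (ε : ℝ) {x : E} (hx : DifferentiableAt ℝ f x) :
    ‖fderiv ℝ (g + ε • f) x‖ ^ 2 ≤ ‖fderiv ℝ g x‖ ^ 2 + (2 * |ε| * (K * K') + |ε| ^ 2 * K ^ 2) := by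
  have hf' := norm_fderiv_le_of_lipschitz ℝ hf (x₀ := x)
  have hg' := norm_fderiv_le_of_lipschitz ℝ hg (x₀ := x)
  by_cases hd : DifferentiableAt ℝ g x
  · rw [fderiv_add hd (hx.const_smul ε), fderiv_const_smul hx]
    have h1 : ‖fderiv ℝ g x + ε • fderiv ℝ f x‖ ≤ ‖fderiv ℝ g x‖ + |ε| * K := by
      refine (norm_add_le _ _).trans ?_
      rw [norm_smul, Real.norm_eq_abs]
      gcongr
    have h2 := pow_le_pow_left₀ (norm_nonneg _) h1 2
    have h3 := mul_le_mul_of_nonneg_right hg' (by positivity : 0 ≤ 2 * |ε| * (K : ℝ))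
    nlinarith
  · rw [fderiv_zero_of_not_differentiableAt]
    · rw [norm_zero, zero_pow two_ne_zero]
      positivity
    · intro h
      refine hd ((h.sub (hx.const_smul ε)).congr_of_eventuallyEq (Eventually.of_forall fun y => ?_))
      simp

end Pointwise

section Reduction

open Filter Topology

theorem tendsto_variance_of_dominated {Ω : Type*} [MeasurableSpace Ω] {ρ : Measure Ω}
    [IsProbabilityMeasure ρ] {F : ℕ → Ω → ℝ} {f : Ω → ℝ} (hF : ∀ n, AEStronglyMeasurable (F n) ρ)
    (hf : MemLp f 2 ρ) (hle : ∀ n x, |F n x| ≤ |f x|)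
    (hlim : ∀ x, Tendsto (fun n => F n x) atTop (𝓝 (f x))) :
    Tendsto (fun n => Var[F n; ρ]) atTop (𝓝 Var[f; ρ]) := by
  have hFL (n : ℕ) : MemLp (F n) 2 ρ := hf.mono (hF n) (Eventually.of_forall (hle n))
  have hfun : (fun n => Var[F n; ρ]) = fun n => ∫ x, (F n ^ 2) x ∂ρ - (∫ x, F n x ∂ρ) ^ 2 :=
    funext fun n => variance_eq_sub (hFL n)
  rw [hfun, variance_eq_sub hf]
  refine Tendsto.sub ?_ (Tendsto.pow ?_ 2)
  · refine tendsto_integral_of_dominated_convergence (fun x => f x ^ 2) (fun n => (hF n).pow 2)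
      hf.integrable_sq (fun n => Eventually.of_forall fun x => ?_)
      (Eventually.of_forall fun x => (hlim x).pow 2)
    simpa using sq_le_sq.2 (hle n x)
  · exact tendsto_integral_of_dominated_convergence (fun x => |f x|) hF
      (hf.integrable one_le_two).abs (fun n => Eventually.of_forall (hle n))
      (Eventually.of_forall hlim)

theorem integral_sq_le_variance_add {Ω : Type*} [MeasurableSpace Ω] {ρ : Measure Ω}
    [IsProbabilityMeasure ρ] {g : Ω → ℝ} (hg : MemLp g 2 ρ) {B : Set Ω} (hB : MeasurableSet B)
    (hρB : 1 / 2 ≤ ρ.real B) {r : ℝ} (hr : ∀ x ∈ B, |g x| ≤ r) :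
    ∫ x, g x ^ 2 ∂ρ ≤ 5 * Var[g; ρ] + 4 * r ^ 2 := by
  have hvar := variance_eq_sub hg
  have hint : Integrable (fun x => (g x - ∫ y, g y ∂ρ) ^ 2) ρ :=
    (hg.sub (memLp_const _)).integrable_sq
  have hvar' := variance_eq_integral hg.aestronglyMeasurable.aemeasurable
  simp only [Pi.pow_apply] at hvar
  set m := ∫ y, g y ∂ρ
  have h1 : ∫ _ in B, m ^ 2 ∂ρ ≤ ∫ x in B, (2 * (g x - m) ^ 2 + 2 * r ^ 2) ∂ρ := by
    refine setIntegral_mono_on (integrable_const _).integrableOn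
      ((hint.const_mul 2).add (integrable_const _)).integrableOn hB fun x hx => ?_
    have := sq_le_sq.2 ((hr x hx).trans (le_abs_self r))
    nlinarith [sq_nonneg (2 * g x - m)]
  have h2 : ∫ x in B, (2 * (g x - m) ^ 2 + 2 * r ^ 2) ∂ρ
      ≤ ∫ x, (2 * (g x - m) ^ 2 + 2 * r ^ 2) ∂ρ :=
    setIntegral_le_integral ((hint.const_mul 2).add (integrable_const _))
      (Eventually.of_forall fun x => by positivity)
  rw [integral_add (hint.const_mul 2) (integrable_const _), integral_const_mul, ← hvar'] at h2
  simp only [integral_const, smul_eq_mul, probReal_univ, one_mul,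
    measureReal_restrict_apply_univ] at h1 h2
  nlinarith [sq_nonneg m]

theorem exists_half_le_measure_abs_le {Ω : Type*} [MeasurableSpace Ω] {ρ : Measure Ω}
    [IsProbabilityMeasure ρ] (f : Ω → ℝ) :
    ∃ r : ℝ, 1 / 2 ≤ ρ.real {x | |f x| ≤ r} := by
  have hmono : Monotone fun n : ℕ => {x | |f x| ≤ n} :=
    fun m n hmn x (hx : |f x| ≤ m) => hx.trans (Nat.cast_le.2 hmn)
  have hlim := tendsto_measure_iUnion_atTop (μ := ρ) hmono
  have huniv : ⋃ n : ℕ, {x | |f x| ≤ n} = Set.univ :=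
    Set.eq_univ_of_forall fun x => Set.mem_iUnion.2 (exists_nat_ge |f x|)
  rw [huniv, measure_univ] at hlim
  have hlim' := (ENNReal.tendsto_toReal one_ne_top).comp hlim
  obtain ⟨n, hn⟩ := (hlim'.eventually (lt_mem_nhds (by norm_num : (1 / 2 : ℝ) < _))).exists
  exact ⟨n, hn.le⟩

theorem BddLipschitz.memLp {X : Type*} [PseudoMetricSpace X] [SecondCountableTopology X]
    [MeasurableSpace X] [OpensMeasurableSpace X] {ρ : Measure X} [IsFiniteMeasure ρ] {f : X → ℝ}
    (hf : BddLipschitz f) (p : ℝ≥0∞) : MemLp f p ρ := by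
  obtain ⟨M, hM⟩ := hf.2
  exact MemLp.of_bound hf.continuous.aestronglyMeasurable M (Eventually.of_forall hM)

variable {E : Type*} [NormedAddCommGroup E] [NormedSpace ℝ E]
  [MeasurableSpace E] [BorelSpace E] {ρ : Measure E} {c : ℝ}

theorem memLp_two_norm_fderiv {f : E → ℝ} (hE : Integrable (fun x => ‖fderiv ℝ f x‖ ^ 2) ρ) :
    MemLp (fun x => ‖fderiv ℝ f x‖) 2 ρ :=
  (memLp_two_iff_integrable_sq (measurable_fderiv ℝ f).norm.aestronglyMeasurable).2 hE

theorem LipschitzWith.integrable_norm_fderiv_sq [IsFiniteMeasure ρ] {f : E → ℝ} {K : NNReal}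
    (hf : LipschitzWith K f) : Integrable (fun x => ‖fderiv ℝ f x‖ ^ 2) ρ := by
  refine Integrable.of_bound ((measurable_fderiv ℝ f).norm.pow_const 2).aestronglyMeasurable
    ((K : ℝ) ^ 2) (Eventually.of_forall fun x => ?_)
  rw [norm_pow, norm_norm]
  exact pow_le_pow_left₀ (norm_nonneg _) (norm_fderiv_le_of_lipschitz ℝ hf) 2

variable [IsProbabilityMeasure ρ] [FiniteDimensional ℝ E]

theorem variance_le_of_bounded (hc : 0 ≤ c)
    (H : ∀ f : E → ℝ, BddLipschitz f → Var[f; ρ] ≤ c * ∫ x, ‖fderiv ℝ f x‖ ^ 2 ∂ρ)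
    {f : E → ℝ} (hf : LocallyLipschitz f) {M : ℝ} (hM : ∀ x, |f x| ≤ M)
    (hE : Integrable (fun x => ‖fderiv ℝ f x‖ ^ 2) ρ) :
    Var[f; ρ] ≤ c * ∫ x, ‖fderiv ℝ f x‖ ^ 2 ∂ρ := by
  obtain ⟨χ, δ, hδ, hχ1, hχ⟩ := exists_cutoff (E := E)
  have hfc := hf.continuous
  have hfL : MemLp f 2 ρ := MemLp.of_bound hfc.aestronglyMeasurable M (Eventually.of_forall hM)
  have hD := memLp_two_norm_fderiv hE
  have hlim : Tendsto (fun n => Var[fun x => f x * χ n x; ρ]) atTop (𝓝 Var[f; ρ]) := by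
    refine tendsto_variance_of_dominated
      (fun n => (hfc.mul (hχ n).1.continuous).aestronglyMeasurable) hfL (fun n x => ?_) fun x => ?_
    · rw [abs_mul, abs_of_nonneg ((hχ n).2.1 x)]
      exact mul_le_of_le_one_right (abs_nonneg _) ((hχ n).2.2.1 x)
    · refine tendsto_const_nhds.congr' ?_
      filter_upwards [hχ1 x] with n hn
      rw [hn, mul_one]
  have hbound (n : ℕ) : Var[fun x => f x * χ n x; ρ] ≤
      c * (∫ x, ‖fderiv ℝ f x‖ ^ 2 ∂ρ + 2 * (M * δ n) * ∫ x, ‖fderiv ℝ f x‖ ∂ρ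
        + (M * δ n) ^ 2) := by
    obtain ⟨hd, h0, h1, hδn, hs, hL⟩ := hχ n
    refine (H _ (.of_mul_cutoff hf hM hL hs)).trans (mul_le_mul_of_nonneg_left ?_ hc)
    have hi : Integrable (fun x => ‖fderiv ℝ f x‖ ^ 2 + 2 * (M * δ n) * ‖fderiv ℝ f x‖) ρ :=
      hE.add ((hD.integrable one_le_two).const_mul _)
    calc ∫ x, ‖fderiv ℝ (fun y => f y * χ n y) x‖ ^ 2 ∂ρ
        ≤ ∫ x, (‖fderiv ℝ f x‖ ^ 2 + 2 * (M * δ n) * ‖fderiv ℝ f x‖ + (M * δ n) ^ 2) ∂ρ := by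
          refine integral_mono_of_nonneg (Eventually.of_forall fun x => sq_nonneg _)
            (hi.add (integrable_const _)) (Eventually.of_forall fun x => ?_)
          have := pow_le_pow_left₀ (norm_nonneg _) (norm_fderiv_mul_cutoff_le hM hd h0 h1 hδn x) 2
          simp only
          linarith
      _ = _ := by
          rw [integral_add hi (integrable_const _),
            integral_add hE ((hD.integrable one_le_two).const_mul _), integral_const_mul]
          simp
  refine le_of_tendsto_of_tendsto' hlim ?_ hbound
  have hMδ : Tendsto (fun n => M * δ n) atTop (𝓝 0) := by simpa using hδ.const_mul M
  simpa using ((((hMδ.const_mul 2).mul_const (∫ x, ‖fderiv ℝ f x‖ ∂ρ)).const_add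
    (∫ x, ‖fderiv ℝ f x‖ ^ 2 ∂ρ)).add (hMδ.pow 2)).const_mul c

theorem memLp_and_variance_le_of_locallyLipschitz (hc : 0 ≤ c)
    (H : ∀ f : E → ℝ, BddLipschitz f → Var[f; ρ] ≤ c * ∫ x, ‖fderiv ℝ f x‖ ^ 2 ∂ρ)
    {f : E → ℝ} (hf : LocallyLipschitz f)
    (hE : Integrable (fun x => ‖fderiv ℝ f x‖ ^ 2) ρ) :
    MemLp f 2 ρ ∧ Var[f; ρ] ≤ c * ∫ x, ‖fderiv ℝ f x‖ ^ 2 ∂ρ := by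
  have hfc := hf.continuous
  set T : ℕ → E → ℝ := fun n x => max (min (f x) (n + 1)) (-(n + 1)) with hT
  have hpos (n : ℕ) : (0 : ℝ) < n + 1 := by positivity
  have hTL (n : ℕ) : LocallyLipschitz (T n) := (hf.min_const _).max_const _
  have hTM (n : ℕ) (x : E) : |T n x| ≤ n + 1 :=
    abs_le.2 ⟨le_max_right _ _, max_le (min_le_right _ _) (by linarith [hpos n])⟩
  have hTf (n : ℕ) (x : E) : |T n x| ≤ |f x| := by
    refine abs_le.2 ⟨?_, max_le ((min_le_left _ _).trans (le_abs_self _))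
      (by linarith [hpos n, abs_nonneg (f x)])⟩
    rcases le_total (f x) (n + 1) with h | h
    · exact (neg_abs_le _).trans ((min_eq_left h).ge.trans (le_max_left _ _))
    · exact (by linarith [abs_nonneg (f x), hpos n] : -|f x| ≤ (n : ℝ) + 1).trans
        ((min_eq_right h).ge.trans (le_max_left _ _))
  have hlim (x : E) : Tendsto (fun n => T n x) atTop (𝓝 (f x)) := by
    refine tendsto_const_nhds.congr' ?_
    obtain ⟨N, hN⟩ := exists_nat_ge |f x|
    filter_upwards [eventually_ge_atTop N] with n hn
    have : (N : ℝ) ≤ n := by exact_mod_cast hn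
    have hx := abs_le.1 (hN.trans (this.trans (by linarith : (n : ℝ) ≤ n + 1)))
    simp only [hT]
    rw [min_eq_left hx.2, max_eq_left hx.1]
  have hTmem (n : ℕ) : MemLp (T n) 2 ρ :=
    MemLp.of_bound (hTL n).continuous.aestronglyMeasurable _ (Eventually.of_forall (hTM n))
  have hTvar (n : ℕ) : Var[T n; ρ] ≤ c * ∫ x, ‖fderiv ℝ f x‖ ^ 2 ∂ρ := by
    have hle (x : E) : ‖fderiv ℝ (T n) x‖ ^ 2 ≤ ‖fderiv ℝ f x‖ ^ 2 :=
      pow_le_pow_left₀ (norm_nonneg _) (norm_fderiv_truncate_le hfc (hpos n) x) 2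
    have hTE : Integrable (fun x => ‖fderiv ℝ (T n) x‖ ^ 2) ρ :=
      hE.mono' ((measurable_fderiv ℝ _).norm.pow_const 2).aestronglyMeasurable
        (Eventually.of_forall fun x => by simpa using hle x)
    exact (variance_le_of_bounded hc H (hTL n) (hTM n) hTE).trans
      (mul_le_mul_of_nonneg_left (integral_mono hTE hE hle) hc)
  obtain ⟨r, hr⟩ := exists_half_le_measure_abs_le (ρ := ρ) f
  have hB : MeasurableSet {x | |f x| ≤ r} := (isClosed_le hfc.abs continuous_const).measurableSet
  set V := c * ∫ x, ‖fderiv ℝ f x‖ ^ 2 ∂ρ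
  have hsq (n : ℕ) : ∫⁻ x, ENNReal.ofReal (T n x ^ 2) ∂ρ ≤ ENNReal.ofReal (5 * V + 4 * r ^ 2) := by
    rw [← ofReal_integral_eq_lintegral_ofReal (hTmem n).integrable_sq
      (Eventually.of_forall fun x => sq_nonneg _)]
    refine ENNReal.ofReal_le_ofReal ?_
    have := integral_sq_le_variance_add (hTmem n) hB hr (fun x hx => (hTf n x).trans hx)
    linarith [hTvar n]
  have hfL : MemLp f 2 ρ := by
    refine (memLp_two_iff_integrable_sq hfc.aestronglyMeasurable).2
      ⟨(hfc.pow 2).aestronglyMeasurable, ?_⟩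
    rw [hasFiniteIntegral_iff_ofReal (Eventually.of_forall fun x => sq_nonneg _)]
    have hfat := lintegral_liminf_le (μ := ρ) (u := atTop)
      (f := fun n x => ENNReal.ofReal (T n x ^ 2))
      fun n => ((hTL n).continuous.pow 2).measurable.ennreal_ofReal
    have hl (x : E) : liminf (fun n => ENNReal.ofReal (T n x ^ 2)) atTop =
        ENNReal.ofReal (f x ^ 2) :=
      (ENNReal.tendsto_ofReal ((hlim x).pow 2)).liminf_eq
    simp only [hl] at hfat
    refine (hfat.trans (liminf_le_of_le (by isBoundedDefault) fun b hb => ?_)).trans_lt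
      (ENNReal.ofReal_lt_top (r := 5 * V + 4 * r ^ 2))
    obtain ⟨n, hn⟩ := hb.exists
    exact hn.trans (hsq n)
  exact ⟨hfL, le_of_tendsto' (tendsto_variance_of_dominated
    (fun n => (hTL n).continuous.aestronglyMeasurable) hfL hTf hlim) hTvar⟩

end Reduction

section PoincareConst

variable {d : ℕ} {ρ : Measure (EuclideanSpace ℝ (Fin d))}

theorem norm_gradient_eq {F : Type*} [NormedAddCommGroup F] [InnerProductSpace ℝ F]
    [CompleteSpace F] (f : F → ℝ) (x : F) : ‖gradient f x‖ = ‖fderiv ℝ f x‖ :=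
  (InnerProductSpace.toDual ℝ F).symm.norm_map _

theorem lintegral_gradient_eq {f : EuclideanSpace ℝ (Fin d) → ℝ}
    (hE : Integrable (fun x => ‖fderiv ℝ f x‖ ^ 2) ρ) :
    ∫⁻ x, ‖gradient f x‖₊ ^ 2 ∂ρ = ENNReal.ofReal (∫ x, ‖fderiv ℝ f x‖ ^ 2 ∂ρ) := by
  rw [ofReal_integral_eq_lintegral_ofReal hE (Filter.Eventually.of_forall fun x => sq_nonneg _)]
  refine lintegral_congr fun x => ?_
  rw [← norm_gradient_eq, ENNReal.ofReal_pow (norm_nonneg _), ofReal_norm,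
    enorm_eq_nnnorm]

/-- The Poincaré inequality with the optimal constant, for functions of finite energy. -/
theorem variance_le_poincareConst_mul (hρ : poincareConst ρ ≠ ⊤)
    {f : EuclideanSpace ℝ (Fin d) → ℝ} (hf : LocallyLipschitz f)
    (hE : Integrable (fun x => ‖fderiv ℝ f x‖ ^ 2) ρ) :
    Var[f; ρ] ≤ (poincareConst ρ).toReal * ∫ x, ‖fderiv ℝ f x‖ ^ 2 ∂ρ := by
  have key (C : ℝ) (hC : (poincareConst ρ).toReal < C) :
      Var[f; ρ] ≤ C * ∫ x, ‖fderiv ℝ f x‖ ^ 2 ∂ρ := by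
    have hC0 : 0 ≤ C := toReal_nonneg.trans hC.le
    obtain ⟨C', hC', hlt⟩ := sInf_lt_iff.1 ((ENNReal.lt_ofReal_iff_toReal_lt hρ).2 hC)
    have h := (hC' f hf).trans (mul_le_mul_left hlt.le _)
    rw [lintegral_gradient_eq hE, ← ENNReal.ofReal_mul hC0] at h
    exact ENNReal.toReal_le_of_le_ofReal
      (mul_nonneg hC0 (integral_nonneg fun x => sq_nonneg _)) h
  have hlim : Filter.Tendsto (fun C : ℝ => C * ∫ x, ‖fderiv ℝ f x‖ ^ 2 ∂ρ)
      (nhdsWithin (poincareConst ρ).toReal (Set.Ioi (poincareConst ρ).toReal))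
      (nhds ((poincareConst ρ).toReal * ∫ x, ‖fderiv ℝ f x‖ ^ 2 ∂ρ)) :=
    (Filter.tendsto_id.mul_const _).mono_left nhdsWithin_le_nhds
  exact ge_of_tendsto hlim (Filter.eventually_of_mem self_mem_nhdsWithin key)

/-- It suffices to test the Poincaré inequality on bounded Lipschitz functions. -/
theorem poincareConst_le_ofReal [IsProbabilityMeasure ρ] {c : ℝ} (hc : 0 < c)
    (H : ∀ f : EuclideanSpace ℝ (Fin d) → ℝ, BddLipschitz f →
      Var[f; ρ] ≤ c * ∫ x, ‖fderiv ℝ f x‖ ^ 2 ∂ρ) :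
    poincareConst ρ ≤ ENNReal.ofReal c := by
  refine sInf_le fun f hf => ?_
  by_cases htop : ∫⁻ x, ‖gradient f x‖₊ ^ 2 ∂ρ = ⊤
  · rw [htop, ENNReal.mul_top (by simpa using hc)]
    exact le_top
  have hE : Integrable (fun x => ‖fderiv ℝ f x‖ ^ 2) ρ := by
    refine ⟨((measurable_fderiv ℝ f).norm.pow_const 2).aestronglyMeasurable, ?_⟩
    rw [hasFiniteIntegral_iff_ofReal (Filter.Eventually.of_forall fun x => sq_nonneg _)]
    refine (lintegral_congr fun x => ?_).trans_lt (lt_top_iff_ne_top.2 htop)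
    rw [← norm_gradient_eq, ENNReal.ofReal_pow (norm_nonneg _), ofReal_norm,
      enorm_eq_nnnorm]
  obtain ⟨hL, hV⟩ := memLp_and_variance_le_of_locallyLipschitz hc.le H hf hE
  rw [← hL.ofReal_variance_eq, lintegral_gradient_eq hE, ← ENNReal.ofReal_mul hc.le]
  exact ENNReal.ofReal_le_ofReal hV

end PoincareConst

section Nondifferentiability

open Filter Topology

variable {E : Type*} [NormedAddCommGroup E] [NormedSpace ℝ E]
  [MeasurableSpace E]

/-- The Poincaré inequality for bounded Lipschitz functions in which the energy is only counted
outside of the set `A`. -/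
def PoincareOff (μ : Measure E) (c : ℝ) (A : Set E) : Prop :=
  ∀ g : E → ℝ, BddLipschitz g → Var[g; μ] ≤ c * ∫ x in Aᶜ, ‖fderiv ℝ g x‖ ^ 2 ∂μ

variable [BorelSpace E] [SecondCountableTopology E] {μ : Measure E} [IsProbabilityMeasure μ] {c : ℝ}

/-- For all but countably many `ε`, the perturbation `g + ε f` is almost nowhere differentiable
where `f` is not differentiable. -/
theorem countable_setOf_perturbation_differentiable (f g : E → ℝ) :
    {ε : ℝ | 0 < μ {x | ¬ DifferentiableAt ℝ f x ∧
      DifferentiableAt ℝ (g + ε • f) x}}.Countable := by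
  refine Measure.countable_meas_pos_of_disjoint_iUnion
    (fun ε => (measurableSet_of_differentiableAt ℝ f).compl.inter
      (measurableSet_of_differentiableAt ℝ (g + ε • f))) fun ε ε' hne => ?_
  refine Set.disjoint_left.2 fun x hx hx' => hx.1 ?_
  have h0 : ε - ε' ≠ 0 := sub_ne_zero.2 hne
  refine ((hx.2.sub hx'.2).const_smul (ε - ε')⁻¹).congr_of_eventuallyEq
    (Eventually.of_forall fun y => ?_)
  simp only [Pi.smul_apply, Pi.sub_apply, Pi.add_apply, smul_eq_mul]
  field_simp
  ring

theorem PoincareOff.union_nondifferentiable (hc : 0 ≤ c) {A : Set E}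
    (h : PoincareOff μ c A) {f : E → ℝ} (hf : BddLipschitz f) :
    PoincareOff μ c (A ∪ {x | ¬ DifferentiableAt ℝ f x}) := by
  intro g hg
  obtain ⟨K, hK⟩ := hf.1
  obtain ⟨K', hK'⟩ := hg.1
  set N := {x | ¬ DifferentiableAt ℝ f x} with hN
  have hNm : MeasurableSet N := (measurableSet_of_differentiableAt ℝ f).compl
  set S := {ε : ℝ | 0 < μ {x | ¬ DifferentiableAt ℝ f x ∧ DifferentiableAt ℝ (g + ε • f) x}}ᶜ
  have hS : Dense S := (countable_setOf_perturbation_differentiable f g).dense_compl ℝ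
  have hne : (𝓝[S] (0 : ℝ)).NeBot := mem_closure_iff_nhdsWithin_neBot.1 (hS 0)
  have hlhs : Tendsto (fun ε : ℝ => Var[g + ε • f; μ]) (𝓝[S] 0) (𝓝 Var[g; μ]) := by
    have : (fun ε : ℝ => Var[g + ε • f; μ]) =
        fun ε : ℝ => Var[g; μ] + 2 * (ε * cov[g, f; μ]) + ε ^ 2 * Var[f; μ] := by
      ext ε
      rw [variance_add (hg.memLp 2) ((hf.smul ε).memLp 2), covariance_smul_right, variance_smul]
    rw [this]
    refine Tendsto.mono_left ?_ nhdsWithin_le_nhds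
    have hcont : Continuous fun ε : ℝ =>
      Var[g; μ] + 2 * (ε * cov[g, f; μ]) + ε ^ 2 * Var[f; μ] := by fun_prop
    simpa using hcont.tendsto 0
  set R := fun ε : ℝ => 2 * |ε| * ((K : ℝ) * K') + |ε| ^ 2 * K ^ 2 with hR
  have hR0 (ε : ℝ) : 0 ≤ R ε := by positivity
  have hrhs : Tendsto (fun ε : ℝ => c * ((∫ x in (A ∪ N)ᶜ, ‖fderiv ℝ g x‖ ^ 2 ∂μ) + R ε))
      (𝓝[S] 0) (𝓝 (c * ∫ x in (A ∪ N)ᶜ, ‖fderiv ℝ g x‖ ^ 2 ∂μ)) := by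
    refine Tendsto.mono_left ?_ nhdsWithin_le_nhds
    have hcont : Continuous fun ε : ℝ =>
      c * ((∫ x in (A ∪ N)ᶜ, ‖fderiv ℝ g x‖ ^ 2 ∂μ) + R ε) := by fun_prop
    simpa [hR] using hcont.tendsto 0
  refine le_of_tendsto_of_tendsto hlhs hrhs (eventually_of_mem self_mem_nhdsWithin fun ε hε => ?_)
  refine (h _ (hg.add (hf.smul ε))).trans (mul_le_mul_of_nonneg_left ?_ hc)
  have hnull : ∀ᵐ x ∂μ, x ∈ N → ¬ DifferentiableAt ℝ (g + ε • f) x := by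
    have : μ {x | ¬ DifferentiableAt ℝ f x ∧ DifferentiableAt ℝ (g + ε • f) x} = 0 := by
      simpa [S] using hε
    filter_upwards [measure_eq_zero_iff_ae_notMem.1 this] with x hx hxN hd
    exact hx ⟨hxN, hd⟩
  have hgi : Integrable (fun x => ‖fderiv ℝ g x‖ ^ 2) μ := hK'.integrable_norm_fderiv_sq
  have hb : Integrable (Nᶜ.indicator fun x => ‖fderiv ℝ g x‖ ^ 2 + R ε) μ :=
    (hgi.add (integrable_const _)).indicator hNm.compl
  calc ∫ x in Aᶜ, ‖fderiv ℝ (g + ε • f) x‖ ^ 2 ∂μ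
      ≤ ∫ x in Aᶜ, Nᶜ.indicator (fun x => ‖fderiv ℝ g x‖ ^ 2 + R ε) x ∂μ := by
        refine integral_mono_of_nonneg (Eventually.of_forall fun x => sq_nonneg _)
          hb.integrableOn (ae_restrict_of_ae ?_)
        filter_upwards [hnull] with x hx
        by_cases hxN : x ∈ N
        · simp [hxN, fderiv_zero_of_not_differentiableAt (hx hxN)]
        · rw [Set.indicator_of_mem (by exact hxN)]
          exact norm_fderiv_add_smul_sq_le hK hK' ε (not_not.1 hxN)
    _ = (∫ x in (A ∪ N)ᶜ, ‖fderiv ℝ g x‖ ^ 2 ∂μ) + μ.real (A ∪ N)ᶜ * R ε := by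
        rw [setIntegral_indicator hNm.compl, Set.compl_union,
          integral_add hgi.integrableOn (integrable_const _)]
        simp
    _ ≤ _ := by
        gcongr
        exact mul_le_of_le_one_left (hR0 ε) measureReal_le_one

theorem PoincareOff.iUnion_nondifferentiable (hc : 0 ≤ c) (h : PoincareOff μ c ∅)
    {l : ℕ → E → ℝ} (hl : ∀ i, BddLipschitz (l i)) :
    PoincareOff μ c (⋃ i, {x | ¬ DifferentiableAt ℝ (l i) x}) := by
  have hm (i : ℕ) : MeasurableSet {x | ¬ DifferentiableAt ℝ (l i) x} :=
    (measurableSet_of_differentiableAt ℝ (l i)).compl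
  have hpart (n : ℕ) : PoincareOff μ c (⋃ i < n, {x | ¬ DifferentiableAt ℝ (l i) x}) := by
    induction n with
    | zero => simpa using h
    | succ n ih =>
      rw [Set.biUnion_lt_succ]
      exact ih.union_nondifferentiable hc (hl n)
  intro g hg
  obtain ⟨K, hK⟩ := hg.1
  have hlim := tendsto_setIntegral_of_antitone (μ := μ) (f := fun x => ‖fderiv ℝ g x‖ ^ 2)
    (s := fun n : ℕ => (⋃ i < n, {x | ¬ DifferentiableAt ℝ (l i) x})ᶜ)
    (fun n => (MeasurableSet.iUnion fun i => MeasurableSet.iUnion fun _ => hm i).compl)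
    (fun m n hmn => Set.compl_subset_compl.2 (Set.biUnion_mono (fun i hi => lt_of_lt_of_le hi hmn)
      fun _ _ => subset_rfl)) ⟨0, hK.integrable_norm_fderiv_sq.integrableOn⟩
  have hset : ⋂ n : ℕ, (⋃ i < n, {x | ¬ DifferentiableAt ℝ (l i) x})ᶜ =
      (⋃ i, {x | ¬ DifferentiableAt ℝ (l i) x})ᶜ := by
    ext x
    simp only [Set.mem_iInter, Set.mem_compl_iff, Set.mem_iUnion, not_exists]
    exact ⟨fun hx i => hx (i + 1) i i.lt_succ_self, fun hx _ i _ => hx i⟩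
  rw [hset] at hlim
  exact ge_of_tendsto' (hlim.const_mul c) fun n => hpart n g hg

/-- The energy may be restricted to a set on which every bounded Lipschitz function is
differentiable almost everywhere. -/
theorem PoincareOff.exists_ae_differentiable (hc : 0 ≤ c) (h : PoincareOff μ c ∅) :
    ∃ A : Set E, MeasurableSet A ∧ PoincareOff μ c A ∧
      ∀ f : E → ℝ, BddLipschitz f → μ ({x | ¬ DifferentiableAt ℝ f x} \ A) = 0 := by
  let 𝓕 := {f : E → ℝ // BddLipschitz f}
  let U : (ℕ → 𝓕) → Set E := fun l => ⋃ i, {x | ¬ DifferentiableAt ℝ (l i).1 x}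
  have hU (l : ℕ → 𝓕) : MeasurableSet (U l) :=
    MeasurableSet.iUnion fun i => (measurableSet_of_differentiableAt ℝ (l i).1).compl
  have : Nonempty 𝓕 := ⟨⟨fun _ => 0, ⟨0, LipschitzWith.const 0⟩, 0, by simp⟩⟩
  obtain ⟨u, -, hu, hmem⟩ := exists_seq_tendsto_sSup (Set.range_nonempty fun l => μ (U l))
    (OrderTop.bddAbove _)
  choose l hl using hmem
  let L : ℕ → 𝓕 := fun n => l n.unpair.1 n.unpair.2
  have hLs : μ (U L) = sSup (Set.range fun l => μ (U l)) := by
    refine le_antisymm (le_sSup ⟨L, rfl⟩) (le_of_tendsto' hu fun n => ?_)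
    rw [← hl n]
    refine measure_mono (Set.iUnion_subset fun i => ?_)
    refine Set.subset_iUnion_of_subset (Nat.pair n i) ?_
    simp [L]
  refine ⟨U L, hU L, h.iUnion_nondifferentiable hc fun i => (L i).2, fun f hf => ?_⟩
  let L' : ℕ → 𝓕 := fun n => Nat.casesOn n ⟨f, hf⟩ L
  have hL' : U L' = {x | ¬ DifferentiableAt ℝ f x} ∪ U L := by
    ext x
    simp only [U, Set.mem_iUnion, Set.mem_union]
    exact Nat.or_exists_add_one.symm
  have hle : μ (U L') ≤ μ (U L) := hLs ▸ le_sSup ⟨L', rfl⟩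
  rw [hL', ← Set.sdiff_union_self, measure_union Set.disjoint_sdiff_left (hU L)] at hle
  by_contra hne
  exact absurd hle (not_le.2 (by
    rw [add_comm]; exact ENNReal.lt_add_right (measure_ne_top _ _) hne))

end Nondifferentiability

section Convolution

open Filter Topology

theorem abs_integral_le_of_abs_le {Ω : Type*} [MeasurableSpace Ω] {P : Measure Ω}
    [IsProbabilityMeasure P] {X : Ω → ℝ} {M : ℝ} (hM : ∀ x, |X x| ≤ M) : |∫ x, X x ∂P| ≤ M := by
  simpa using norm_integral_le_of_norm_le_const (μ := P) (f := X) (C := M) (Eventually.of_forall hM)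

theorem sq_integral_le_integral_sq {Ω : Type*} [MeasurableSpace Ω] {P : Measure Ω}
    [IsProbabilityMeasure P] {X : Ω → ℝ} (hX : MemLp X 2 P) :
    (∫ x, X x ∂P) ^ 2 ≤ ∫ x, X x ^ 2 ∂P := by
  have := variance_eq_sub hX
  simp only [Pi.pow_apply] at this
  linarith [variance_nonneg X P]

theorem integral_conv_of_bound {G : Type*} [NormedAddCommGroup G] [MeasurableSpace G] [BorelSpace G]
    [SecondCountableTopology G] {μ ν : Measure G} [IsProbabilityMeasure μ] [IsProbabilityMeasure ν]
    {g : G → ℝ} (hg : Measurable g) {M : ℝ} (hM : ∀ x, |g x| ≤ M) :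
    Integrable (fun p : G × G => g (p.1 + p.2)) (μ.prod ν) ∧
      ∫ x, g x ∂(μ ∗ ν) = ∫ x, ∫ y, g (x + y) ∂ν ∂μ :=
  ⟨Integrable.of_bound (hg.comp (measurable_fst.add measurable_snd)).aestronglyMeasurable M
    (Eventually.of_forall fun _ => hM _),
   integral_conv (Integrable.of_bound hg.aestronglyMeasurable M (Eventually.of_forall hM))⟩

theorem BddLipschitz.integral_add {G : Type*} [NormedAddCommGroup G] [MeasurableSpace G]
    [BorelSpace G] [SecondCountableTopology G] {ν : Measure G} [IsProbabilityMeasure ν] {f : G → ℝ}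
    (hf : BddLipschitz f) :
    BddLipschitz (fun x => ∫ y, f (x + y) ∂ν) := by
  have hi (x : G) : Integrable (fun y => f (x + y)) ν :=
    (hf.comp_add_left x).memLp 1 |>.integrable le_rfl
  obtain ⟨⟨K, hK⟩, M, hM⟩ := hf
  refine ⟨⟨K, LipschitzWith.of_dist_le_mul fun a b => ?_⟩, M, fun x => ?_⟩
  · rw [dist_eq_norm, ← integral_sub (hi a) (hi b)]
    refine (norm_integral_le_of_norm_le_const (C := K * dist a b)
      (Eventually.of_forall fun y => ?_)).trans (by simp)
    simpa [dist_eq_norm] using hK.dist_le_mul (a + y) (b + y)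
  · exact abs_integral_le_of_abs_le fun y => hM (x + y)

variable {E : Type*} [NormedAddCommGroup E] [NormedSpace ℝ E]
  [MeasurableSpace E] [BorelSpace E]

variable [SecondCountableTopology E] {μ ν : Measure E} [IsProbabilityMeasure μ]
  [IsProbabilityMeasure ν] {c : ℝ}

theorem hasFDerivAt_integral_add [FiniteDimensional ℝ E] {f : E → ℝ} (hf : BddLipschitz f) {x : E}
    (hx : ∀ᵐ y ∂ν, DifferentiableAt ℝ f (x + y)) :
    HasFDerivAt (fun x => ∫ y, f (x + y) ∂ν) (∫ y, fderiv ℝ f (x + y) ∂ν) x := by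
  have hfc := hf.continuous
  obtain ⟨K, hK⟩ := hf.1
  refine (hasFDerivAt_integral_of_dominated_loc_of_lip (s := Set.univ) (bound := fun _ => (K : ℝ))
    (F := fun x y => f (x + y)) (F' := fun y => fderiv ℝ f (x + y)) univ_mem
    (Eventually.of_forall fun z => (hfc.comp (continuous_const_add z)).aestronglyMeasurable)
    ((hf.comp_add_left x).memLp 1 |>.integrable le_rfl)
    ((measurable_fderiv ℝ f).comp (measurable_const_add x)).aestronglyMeasurable
    (Eventually.of_forall fun y => ?_) (integrable_const _) ?_).2
  · refine (LipschitzWith.of_dist_le_mul fun a b => ?_).lipschitzOnWith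
    simpa using hK.dist_le_mul (a + y) (b + y)
  · filter_upwards [hx] with y hy
    exact (hasFDerivAt_comp_add_right y).2 hy.hasFDerivAt

/-- The Poincaré inequality for the average `x ↦ ∫ f (x + y) ∂ν`, with the averaged derivative of
`f` in place of the derivative of the average. -/
theorem PoincareOff.variance_integral_add_le [FiniteDimensional ℝ E] (hc : 0 ≤ c)
    (h : PoincareOff μ c ∅) {f : E → ℝ} (hf : BddLipschitz f) :
    Var[fun x => ∫ y, f (x + y) ∂ν; μ] ≤ c * ∫ x, ‖∫ y, fderiv ℝ f (x + y) ∂ν‖ ^ 2 ∂μ := by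
  obtain ⟨A, hA, hPA, hdiff⟩ := h.exists_ae_differentiable hc
  obtain ⟨K, hK⟩ := hf.1
  have hae : ∀ᵐ x ∂μ, ∀ᵐ y ∂ν, x ∈ Aᶜ → DifferentiableAt ℝ f (x + y) := by
    refine (Measure.ae_ae_comm ?_).2 (Eventually.of_forall fun y => ?_)
    · simp only [imp_iff_not_or]
      exact (hA.compl.compl.preimage measurable_fst).union
        ((measurableSet_of_differentiableAt ℝ f).preimage (measurable_fst.add measurable_snd))
    · filter_upwards [measure_eq_zero_iff_ae_notMem.1 (hdiff _ (hf.comp_add_right y))]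
        with x hx hxA
      by_contra hnd
      refine hx ⟨fun hd => hnd ?_, hxA⟩
      exact (differentiableAt_comp_add_right y).1 hd
  refine (hPA _ hf.integral_add).trans (mul_le_mul_of_nonneg_left ?_ hc)
  have hmeas : StronglyMeasurable fun x => ∫ y, fderiv ℝ f (x + y) ∂ν :=
    (((measurable_fderiv ℝ f).comp (measurable_fst.add measurable_snd)).stronglyMeasurable
      (f := fun p : E × E => fderiv ℝ f (p.1 + p.2))).integral_prod_right'
  have hint : Integrable (fun x => ‖∫ y, fderiv ℝ f (x + y) ∂ν‖ ^ 2) μ := by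
    refine Integrable.of_bound (hmeas.norm.pow 2).aestronglyMeasurable ((K : ℝ) ^ 2)
      (Eventually.of_forall fun x => ?_)
    rw [norm_pow, norm_norm]
    refine pow_le_pow_left₀ (norm_nonneg _) ((norm_integral_le_of_norm_le_const
      (Eventually.of_forall fun y => norm_fderiv_le_of_lipschitz ℝ hK)).trans (by simp)) 2
  refine le_trans (integral_mono_of_nonneg (Eventually.of_forall fun x => sq_nonneg _)
    hint.integrableOn ?_) (setIntegral_le_integral hint (Eventually.of_forall fun x => sq_nonneg _))
  refine (ae_restrict_iff' hA.compl).2 ?_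
  filter_upwards [hae] with x hx hxA
  have hx' : ∀ᵐ y ∂ν, DifferentiableAt ℝ f (x + y) := by
    filter_upwards [hx] with y hy using hy hxA
  simp only [(hasFDerivAt_integral_add hf hx').fderiv]
  exact le_rfl

theorem PoincareOff.variance_conv_le [FiniteDimensional ℝ E] {a b : ℝ} (ha : 0 ≤ a)
    (hμ : PoincareOff μ a ∅) (hν : PoincareOff ν b ∅) {f : E → ℝ} (hf : BddLipschitz f) :
    Var[f; μ ∗ ν] ≤ a * ∫ x, ‖∫ y, fderiv ℝ f (x + y) ∂ν‖ ^ 2 ∂μ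
      + b * ∫ x, ‖fderiv ℝ f x‖ ^ 2 ∂(μ ∗ ν) := by
  obtain ⟨M, hM⟩ := hf.2
  obtain ⟨K, hK⟩ := hf.1
  have hfc := hf.continuous
  have hM2 (x : E) : |f x ^ 2| ≤ M ^ 2 := by
    rw [abs_pow]
    exact pow_le_pow_left₀ (abs_nonneg _) (hM x) 2
  have hK2 (x : E) : |‖fderiv ℝ f x‖ ^ 2| ≤ K ^ 2 := by
    rw [abs_pow, abs_norm]
    exact pow_le_pow_left₀ (norm_nonneg _) (norm_fderiv_le_of_lipschitz ℝ hK) 2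
  obtain ⟨-, h1⟩ := integral_conv_of_bound (μ := μ) (ν := ν) hfc.measurable hM
  obtain ⟨hi2, h2⟩ := integral_conv_of_bound (μ := μ) (ν := ν) (hfc.measurable.pow_const 2) hM2
  obtain ⟨hi3, h3⟩ := integral_conv_of_bound (μ := μ) (ν := ν)
    ((measurable_fderiv ℝ f).norm.pow_const 2) hK2
  have hh := variance_eq_sub ((hf.integral_add (ν := ν)).memLp (ρ := μ) 2)
  have hhi : Integrable (fun x => (∫ y, f (x + y) ∂ν) ^ 2) μ :=
    ((hf.integral_add (ν := ν)).memLp (ρ := μ) 2).integrable_sq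
  have hV := variance_eq_sub (hf.memLp (ρ := μ ∗ ν) 2)
  simp only [Pi.pow_apply] at hh hV
  have hcond : ∫ x, (∫ y, f (x + y) ^ 2 ∂ν - (∫ y, f (x + y) ∂ν) ^ 2) ∂μ
      ≤ ∫ x, b * ∫ y, ‖fderiv ℝ f (x + y)‖ ^ 2 ∂ν ∂μ := by
    refine integral_mono (hi2.integral_prod_left.sub hhi) (hi3.integral_prod_left.const_mul b)
      fun x => ?_
    have hx := variance_eq_sub ((hf.comp_add_left x).memLp (ρ := ν) 2)
    have hx' := hν _ (hf.comp_add_left x)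
    simp only [Pi.pow_apply] at hx
    rw [Set.compl_empty, setIntegral_univ] at hx'
    simp only [fderiv_comp_add_left] at hx'
    linarith
  rw [integral_sub hi2.integral_prod_left hhi, integral_const_mul] at hcond
  have hmain := hμ.variance_integral_add_le (ν := ν) ha hf
  rw [hV, h1, h2, h3]
  linarith

/-- Hoeffding-type inequality for the conditional expectations of a function of two independent
variables. -/
theorem integral_sq_integral_add_le {α β : Type*} [MeasurableSpace α] [MeasurableSpace β]
    {P : Measure α} {Q : Measure β} [IsProbabilityMeasure P] [IsProbabilityMeasure Q]
    {F : α → β → ℝ} (hF : Measurable (Function.uncurry F)) {M : ℝ} (hM : ∀ x y, |F x y| ≤ M) :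
    ∫ x, (∫ y, F x y ∂Q) ^ 2 ∂P + ∫ y, (∫ x, F x y ∂P) ^ 2 ∂Q
      ≤ ∫ x, ∫ y, F x y ^ 2 ∂Q ∂P + (∫ x, ∫ y, F x y ∂Q ∂P) ^ 2 := by
  have huM (x : α) : |∫ y, F x y ∂Q| ≤ M :=
    abs_integral_le_of_abs_le (hM x)
  have hvM (y : β) : |∫ x, F x y ∂P| ≤ M :=
    abs_integral_le_of_abs_le fun x => hM x y
  have hu : Measurable fun x => ∫ y, F x y ∂Q :=
    hF.stronglyMeasurable.integral_prod_right.measurable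
  have hv : Measurable fun y => ∫ x, F x y ∂P :=
    hF.stronglyMeasurable.integral_prod_left.measurable
  have hFx (x : α) : MemLp (F x) 2 Q :=
    MemLp.of_bound (hF.comp measurable_prodMk_left).aestronglyMeasurable M
      (Eventually.of_forall (hM x))
  have hFy (y : β) : MemLp (fun x => F x y) 2 P :=
    MemLp.of_bound (hF.comp measurable_prodMk_right).aestronglyMeasurable M
      (Eventually.of_forall fun x => hM x y)
  have huL : MemLp (fun x => ∫ y, F x y ∂Q) 2 P :=
    MemLp.of_bound hu.aestronglyMeasurable M (Eventually.of_forall huM)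
  have hvL : MemLp (fun y => ∫ x, F x y ∂P) 2 Q :=
    MemLp.of_bound hv.aestronglyMeasurable M (Eventually.of_forall hvM)
  have hFL : MemLp (Function.uncurry F) 2 (P.prod Q) :=
    MemLp.of_bound hF.aestronglyMeasurable M (Eventually.of_forall fun p => hM _ _)
  have hWL : MemLp (fun p : α × β => F p.1 p.2 - ∫ y, F p.1 y ∂Q) 2 (P.prod Q) :=
    hFL.sub (MemLp.of_bound (hu.comp measurable_fst).aestronglyMeasurable M
      (Eventually.of_forall fun p => huM _))
  have hswap : ∫ y, ∫ x, F x y ∂P ∂Q = ∫ x, ∫ y, F x y ∂Q ∂P :=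
    (integral_integral_swap (hFL.integrable one_le_two)).symm
  have hvar := variance_eq_integral (X := fun y => ∫ x, F x y ∂P) (μ := Q) hv.aemeasurable
  have hvar' := variance_eq_sub hvL
  simp only [Pi.pow_apply, hswap] at hvar hvar'
  have h1 : ∫ y, (∫ x, F x y ∂P - ∫ x, ∫ y, F x y ∂Q ∂P) ^ 2 ∂Q
      ≤ ∫ y, ∫ x, (F x y - ∫ z, F x z ∂Q) ^ 2 ∂P ∂Q := by
    refine integral_mono (hvL.sub (memLp_const _)).integrable_sq
      hWL.integrable_sq.integral_prod_right fun y => ?_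
    simp only
    rw [← integral_sub ((hFy y).integrable one_le_two) (huL.integrable one_le_two)]
    exact sq_integral_le_integral_sq ((hFy y).sub huL)
  have h2 : ∫ y, ∫ x, (F x y - ∫ z, F x z ∂Q) ^ 2 ∂P ∂Q
      = ∫ x, (∫ y, F x y ^ 2 ∂Q - (∫ y, F x y ∂Q) ^ 2) ∂P := by
    rw [← integral_integral_swap hWL.integrable_sq]
    refine integral_congr_ae (Eventually.of_forall fun x => ?_)
    have hx := variance_eq_sub (hFx x)
    rw [variance_eq_integral (hFx x).aestronglyMeasurable.aemeasurable] at hx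
    exact hx
  have hF2 : Integrable (fun x => ∫ y, F x y ^ 2 ∂Q) P := hFL.integrable_sq.integral_prod_left
  rw [h2, integral_sub hF2 huL.integrable_sq] at h1
  linarith

end Convolution

section Coordinates

open Filter Topology

variable {d : ℕ}

theorem norm_sq_eq_sum_apply_single (L : EuclideanSpace ℝ (Fin d) →L[ℝ] ℝ) :
    ‖L‖ ^ 2 = ∑ i, L (EuclideanSpace.single i 1) ^ 2 := by
  rw [← (InnerProductSpace.toDual ℝ (EuclideanSpace ℝ (Fin d))).symm.norm_map L,
    EuclideanSpace.norm_sq_eq]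
  refine Finset.sum_congr rfl fun i _ => ?_
  rw [← InnerProductSpace.toDual_symm_apply, EuclideanSpace.inner_single_right]
  simp

theorem norm_add_smul_sq (L m : EuclideanSpace ℝ (Fin d) →L[ℝ] ℝ) (t : ℝ) :
    ‖L + t • m‖ ^ 2 = ‖L‖ ^ 2 + 2 * t * ∑ i, m (EuclideanSpace.single i 1) *
      L (EuclideanSpace.single i 1) + t ^ 2 * ‖m‖ ^ 2 := by
  simp only [norm_sq_eq_sum_apply_single, Finset.mul_sum, ← Finset.sum_add_distrib]
  refine Finset.sum_congr rfl fun i _ => ?_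
  simp only [_root_.add_apply, _root_.smul_apply, smul_eq_mul]
  ring

theorem LipschitzWith.integrable_fderiv {ρ : Measure (EuclideanSpace ℝ (Fin d))}
    [IsFiniteMeasure ρ] {f : EuclideanSpace ℝ (Fin d) → ℝ} {K : NNReal} (hK : LipschitzWith K f) :
    Integrable (fderiv ℝ f) ρ :=
  Integrable.of_bound (measurable_fderiv ℝ f).aestronglyMeasurable K
    (Eventually.of_forall fun _ => norm_fderiv_le_of_lipschitz ℝ hK)

theorem LipschitzWith.abs_fderiv_apply_single_le {f : EuclideanSpace ℝ (Fin d) → ℝ} {K : NNReal}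
    (hK : LipschitzWith K f) (x : EuclideanSpace ℝ (Fin d)) (i : Fin d) :
    |fderiv ℝ f x (EuclideanSpace.single i 1)| ≤ K := by
  simpa using (fderiv ℝ f x).le_of_opNorm_le (norm_fderiv_le_of_lipschitz ℝ hK)
    (EuclideanSpace.single i 1)

theorem integral_norm_sq_integral_fderiv_add_le {μ ν : Measure (EuclideanSpace ℝ (Fin d))}
    [IsProbabilityMeasure μ] [IsProbabilityMeasure ν] {f : EuclideanSpace ℝ (Fin d) → ℝ}
    {K : NNReal} (hK : LipschitzWith K f) :
    ∫ x, ‖∫ y, fderiv ℝ f (x + y) ∂ν‖ ^ 2 ∂μ + ∫ y, ‖∫ x, fderiv ℝ f (x + y) ∂μ‖ ^ 2 ∂ν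
      ≤ ∫ x, ‖fderiv ℝ f x‖ ^ 2 ∂(μ ∗ ν) + ‖∫ x, fderiv ℝ f x ∂(μ ∗ ν)‖ ^ 2 := by
  have hmeas (i : Fin d) : Measurable fun x => fderiv ℝ f x (EuclideanSpace.single i 1) :=
    measurable_fderiv_apply_const ℝ f _
  have hb := hK.abs_fderiv_apply_single_le
  have hbs (i : Fin d) (x : EuclideanSpace ℝ (Fin d)) :
      |fderiv ℝ f x (EuclideanSpace.single i 1) ^ 2| ≤ (K : ℝ) ^ 2 := by
    rw [abs_pow]
    exact pow_le_pow_left₀ (abs_nonneg _) (hb x i) 2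
  have hbi2 {ρ ρ' : Measure (EuclideanSpace ℝ (Fin d))} [IsProbabilityMeasure ρ]
      [IsProbabilityMeasure ρ'] (i : Fin d) : Integrable
      (fun x => (∫ y, fderiv ℝ f (x + y) (EuclideanSpace.single i 1) ∂ρ) ^ 2) ρ' := by
    refine Integrable.of_bound ?_ ((K : ℝ) ^ 2) (Eventually.of_forall fun x => ?_)
    · exact ((((hmeas i).comp (measurable_fst.add measurable_snd)).stronglyMeasurable
        (f := fun p : _ × _ => fderiv ℝ f (p.1 + p.2)
          (EuclideanSpace.single i 1))).integral_prod_right').pow 2 |>.aestronglyMeasurable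
    · rw [norm_pow]
      exact pow_le_pow_left₀ (norm_nonneg _) (abs_integral_le_of_abs_le fun _ => hb _ i) 2
  have hcomp {ρ : Measure (EuclideanSpace ℝ (Fin d))} [IsProbabilityMeasure ρ] {g}
      (hg : Measurable g) : ‖∫ y, fderiv ℝ f (g y) ∂ρ‖ ^ 2
        = ∑ i, (∫ y, fderiv ℝ f (g y) (EuclideanSpace.single i 1) ∂ρ) ^ 2 := by
    rw [norm_sq_eq_sum_apply_single]
    refine Finset.sum_congr rfl fun i _ => ?_
    rw [ContinuousLinearMap.integral_apply]
    exact Integrable.of_bound ((measurable_fderiv ℝ f).comp hg).aestronglyMeasurable K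
      (Eventually.of_forall fun _ => norm_fderiv_le_of_lipschitz ℝ hK)
  have hU (x : EuclideanSpace ℝ (Fin d)) := hcomp (ρ := ν) (measurable_const_add x)
  have hU' (y : EuclideanSpace ℝ (Fin d)) := hcomp (ρ := μ) (measurable_add_const y)
  have hm := hcomp (ρ := μ ∗ ν) measurable_id
  simp only [id] at hm
  rw [hm]
  simp only [hU, hU', norm_sq_eq_sum_apply_single]
  rw [integral_finsetSum _ fun i _ => hbi2 i, integral_finsetSum, integral_finsetSum,
    ← Finset.sum_add_distrib, ← Finset.sum_add_distrib]
  · refine Finset.sum_le_sum fun i _ => ?_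
    rw [(integral_conv_of_bound ((hmeas i).pow_const 2) (hbs i)).2,
      (integral_conv_of_bound (hmeas i) fun x => hb x i).2]
    exact integral_sq_integral_add_le
      ((hmeas i).comp (measurable_fst.add measurable_snd)) fun x y => hb (x + y) i
  · exact fun i _ => Integrable.of_bound ((hmeas i).pow_const 2).aestronglyMeasurable _
      (Eventually.of_forall (hbs i))
  · intro i _
    simp only [add_comm _ (_ : EuclideanSpace ℝ (Fin d))]
    exact hbi2 i

end Coordinates

section Stability

open Filter Topology

variable {d : ℕ}

theorem maxDirVar_nonneg (ρ : Measure (EuclideanSpace ℝ (Fin d))) : 0 ≤ maxDirVar ρ :=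
  Real.iSup_nonneg fun _ => variance_nonneg _ _

variable {ρ : Measure (EuclideanSpace ℝ (Fin d))} [IsProbabilityMeasure ρ]

theorem poincareOff_poincareConst (hρ : poincareConst ρ ≠ ⊤) :
    PoincareOff ρ (poincareConst ρ).toReal ∅ := by
  intro g hg
  obtain ⟨K, hK⟩ := hg.1
  rw [Set.compl_empty, setIntegral_univ]
  exact variance_le_poincareConst_mul hρ hK.locallyLipschitz hK.integrable_norm_fderiv_sq

theorem memLp_two_continuousLinearMap (hρ : poincareConst ρ ≠ ⊤)
    (m : EuclideanSpace ℝ (Fin d) →L[ℝ] ℝ) : MemLp m 2 ρ := by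
  refine (memLp_and_variance_le_of_locallyLipschitz
    (toReal_nonneg (a := poincareConst ρ)) (fun f hf => ?_)
    m.lipschitz.locallyLipschitz m.lipschitz.integrable_norm_fderiv_sq).1
  simpa using poincareOff_poincareConst hρ f hf

theorem variance_continuousLinearMap_le (hρ : poincareConst ρ ≠ ⊤)
    (m : EuclideanSpace ℝ (Fin d) →L[ℝ] ℝ) : Var[m; ρ] ≤ (poincareConst ρ).toReal * ‖m‖ ^ 2 := by
  simpa using variance_le_poincareConst_mul hρ m.lipschitz.locallyLipschitz
    m.lipschitz.integrable_norm_fderiv_sq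

theorem variance_inner_le (hρ : poincareConst ρ ≠ ⊤)
    (α : {a : EuclideanSpace ℝ (Fin d) // ‖a‖ = 1}) :
    Var[fun x => ⟪(α : EuclideanSpace ℝ (Fin d)), x⟫; ρ] ≤ (poincareConst ρ).toReal := by
  simpa [α.2] using variance_continuousLinearMap_le hρ (innerSL ℝ α.1)

theorem maxDirVar_le (hρ : poincareConst ρ ≠ ⊤) : maxDirVar ρ ≤ (poincareConst ρ).toReal :=
  Real.iSup_le (variance_inner_le hρ) toReal_nonneg

theorem variance_continuousLinearMap_le_maxDirVar (hρ : poincareConst ρ ≠ ⊤)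
    (m : EuclideanSpace ℝ (Fin d) →L[ℝ] ℝ) : Var[m; ρ] ≤ maxDirVar ρ * ‖m‖ ^ 2 := by
  obtain ⟨v, rfl⟩ := (InnerProductSpace.toDual ℝ (EuclideanSpace ℝ (Fin d))).surjective m
  rw [LinearIsometryEquiv.norm_map]
  rcases eq_or_ne v 0 with rfl | hv
  · simp
  have hv' : ‖v‖ ≠ 0 := norm_ne_zero_iff.2 hv
  have hunit : ‖‖v‖⁻¹ • v‖ = 1 := by
    rw [norm_smul, norm_inv, norm_norm, inv_mul_cancel₀ hv']
  have hle : Var[fun x => ⟪‖v‖⁻¹ • v, x⟫; ρ] ≤ maxDirVar ρ :=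
    le_ciSup (f := fun α : {a : EuclideanSpace ℝ (Fin d) // ‖a‖ = 1} =>
      Var[fun x => ⟪(α : EuclideanSpace ℝ (Fin d)), x⟫; ρ])
      ⟨(poincareConst ρ).toReal, by rintro _ ⟨α, rfl⟩; exact variance_inner_le hρ α⟩ ⟨_, hunit⟩
  have heq : (InnerProductSpace.toDual ℝ (EuclideanSpace ℝ (Fin d)) v : _ → ℝ)
      = fun x => ‖v‖ * ⟪‖v‖⁻¹ • v, x⟫ := by
    ext x
    rw [InnerProductSpace.toDual_apply_apply, real_inner_smul_left, mul_inv_cancel_left₀ hv']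
  rw [heq, variance_const_mul, mul_comm]
  exact mul_le_mul_of_nonneg_right hle (sq_nonneg _)

theorem sq_covariance_le {Ω : Type*} [MeasurableSpace Ω] {P : Measure Ω} [IsProbabilityMeasure P]
    {X Y : Ω → ℝ} (hX : MemLp X 2 P) (hY : MemLp Y 2 P) :
    cov[X, Y; P] ^ 2 ≤ Var[X; P] * Var[Y; P] := by
  have h := discrim_le_zero (a := Var[Y; P]) (b := 2 * cov[X, Y; P]) (c := Var[X; P]) fun t => by
    have ht := variance_nonneg (X + t • Y) P
    rw [variance_add hX (hY.const_smul t), covariance_smul_right, variance_smul] at ht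
    linarith
  rw [discrim] at h
  linarith

/-- The mean derivative of an almost extremal function for the Poincaré inequality is almost an
eigenvector: the defect in the inequality controls the covariance with its mean derivative. -/
theorem sq_sub_covariance_le (hρ : poincareConst ρ ≠ ⊤) {f : EuclideanSpace ℝ (Fin d) → ℝ}
    (hf : BddLipschitz f) :
    ((poincareConst ρ).toReal * ‖∫ x, fderiv ℝ f x ∂ρ‖ ^ 2 - cov[f, ⇑(∫ x, fderiv ℝ f x ∂ρ); ρ]) ^ 2
      ≤ ((poincareConst ρ).toReal * ∫ x, ‖fderiv ℝ f x‖ ^ 2 ∂ρ - Var[f; ρ]) *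
        ((poincareConst ρ).toReal * ‖∫ x, fderiv ℝ f x ∂ρ‖ ^ 2) := by
  obtain ⟨K, hK⟩ := hf.1
  set m := ∫ x, fderiv ℝ f x ∂ρ with hm
  set C := (poincareConst ρ).toReal
  have hC : 0 ≤ C := toReal_nonneg
  have hmL := memLp_two_continuousLinearMap hρ m
  have hlin : Integrable (fun x => ∑ i, m (EuclideanSpace.single i 1) *
      fderiv ℝ f x (EuclideanSpace.single i 1)) ρ :=
    integrable_finsetSum _ fun i _ =>
      (hK.integrable_fderiv.apply_continuousLinearMap _).const_mul _
  have hlin' : ∫ x, ∑ i, m (EuclideanSpace.single i 1) *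
      fderiv ℝ f x (EuclideanSpace.single i 1) ∂ρ = ‖m‖ ^ 2 := by
    rw [norm_sq_eq_sum_apply_single, integral_finsetSum]
    · refine Finset.sum_congr rfl fun i _ => ?_
      rw [integral_const_mul, ← ContinuousLinearMap.integral_apply hK.integrable_fderiv, ← hm, sq]
    · exact fun i _ => (hK.integrable_fderiv.apply_continuousLinearMap _).const_mul _
  have hD : Integrable (fun x => ‖fderiv ℝ f x‖ ^ 2) ρ := hK.integrable_norm_fderiv_sq
  have henergy (t : ℝ) : ∫ x, ‖fderiv ℝ (f + t • ⇑m) x‖ ^ 2 ∂ρ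
      ≤ ∫ x, ‖fderiv ℝ f x‖ ^ 2 ∂ρ + 2 * t * ‖m‖ ^ 2 + t ^ 2 * ‖m‖ ^ 2 := by
    have hi : Integrable (fun x => ‖fderiv ℝ f x‖ ^ 2 + 2 * t * ∑ i,
        m (EuclideanSpace.single i 1) * fderiv ℝ f x (EuclideanSpace.single i 1)) ρ :=
      hD.add (hlin.const_mul (2 * t))
    have hi' := hi.add (integrable_const (t ^ 2 * ‖m‖ ^ 2))
    calc _ ≤ ∫ x, (‖fderiv ℝ f x‖ ^ 2 + 2 * t * ∑ i, m (EuclideanSpace.single i 1) *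
          fderiv ℝ f x (EuclideanSpace.single i 1) + t ^ 2 * ‖m‖ ^ 2) ∂ρ := by
            refine integral_mono_of_nonneg (Eventually.of_forall fun x => sq_nonneg _) hi'
              (Eventually.of_forall fun x => ?_)
            have htm : DifferentiableAt ℝ (t • ⇑m) x := m.differentiableAt.const_smul t
            simp only
            rw [← norm_add_smul_sq]
            by_cases hx : DifferentiableAt ℝ f x
            · rw [fderiv_add hx htm, fderiv_const_smul m.differentiableAt, m.fderiv]
            · have hx' : ¬ DifferentiableAt ℝ (f + t • ⇑m) x := fun h =>
                hx (by simpa using h.sub htm)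
              rw [fderiv_zero_of_not_differentiableAt hx']
              simp
      _ = _ := by
        rw [integral_add hi (integrable_const _),
          integral_add hD (hlin.const_mul (2 * t)), integral_const_mul, hlin']
        simp
  have h := discrim_le_zero (a := C * ‖m‖ ^ 2 - Var[m; ρ])
    (b := 2 * (C * ‖m‖ ^ 2 - cov[f, m; ρ]))
    (c := C * ∫ x, ‖fderiv ℝ f x‖ ^ 2 ∂ρ - Var[f; ρ]) fun t => by
      have hlip : LipschitzWith (K + ‖t‖₊ * ‖m‖₊) (f + t • ⇑m) :=
        hK.add ((lipschitzWith_smul t).comp m.lipschitz)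
      have ht := (variance_le_poincareConst_mul hρ hlip.locallyLipschitz
        hlip.integrable_norm_fderiv_sq).trans (mul_le_mul_of_nonneg_left (henergy t) hC)
      rw [variance_add (hf.memLp 2) (hmL.const_smul t), covariance_smul_right, variance_smul] at ht
      linarith
  rw [discrim] at h
  have hdef : 0 ≤ C * ∫ x, ‖fderiv ℝ f x‖ ^ 2 ∂ρ - Var[f; ρ] :=
    sub_nonneg.2 (variance_le_poincareConst_mul hρ hK.locallyLipschitz hD)
  nlinarith [mul_nonneg hdef (variance_nonneg m ρ)]

variable {μ ν : Measure (EuclideanSpace ℝ (Fin d))}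
    [IsProbabilityMeasure μ] [IsProbabilityMeasure ν]

theorem variance_conv_le_add_mul (hμ : poincareConst μ ≠ ⊤) (hν : poincareConst ν ≠ ⊤)
    {f : EuclideanSpace ℝ (Fin d) → ℝ} (hf : BddLipschitz f) :
    Var[f; μ ∗ ν] ≤ ((poincareConst μ).toReal + (poincareConst ν).toReal) *
      ∫ x, ‖fderiv ℝ f x‖ ^ 2 ∂(μ ∗ ν) := by
  obtain ⟨K, hK⟩ := hf.1
  have hle (x : EuclideanSpace ℝ (Fin d)) : ‖fderiv ℝ f x‖ ≤ K := norm_fderiv_le_of_lipschitz ℝ hK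
  have hsq (x : EuclideanSpace ℝ (Fin d)) : |‖fderiv ℝ f x‖ ^ 2| ≤ K ^ 2 := by
    rw [abs_pow, abs_norm]
    exact pow_le_pow_left₀ (norm_nonneg _) (hle x) 2
  obtain ⟨hi, heq⟩ := integral_conv_of_bound (μ := μ) (ν := ν)
    ((measurable_fderiv ℝ f).norm.pow_const 2) hsq
  have hU : ∫ x, ‖∫ y, fderiv ℝ f (x + y) ∂ν‖ ^ 2 ∂μ ≤ ∫ x, ‖fderiv ℝ f x‖ ^ 2 ∂(μ ∗ ν) := by
    rw [heq]
    refine integral_mono_of_nonneg (Eventually.of_forall fun x => sq_nonneg _)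
      hi.integral_prod_left (Eventually.of_forall fun x => ?_)
    refine (pow_le_pow_left₀ (norm_nonneg _) (norm_integral_le_integral_norm _) 2).trans
      (sq_integral_le_integral_sq (MemLp.of_bound
        ((measurable_fderiv ℝ f).comp (measurable_const_add x)).norm.aestronglyMeasurable K
        (Eventually.of_forall fun y => ?_)))
    rw [norm_norm]
    exact hle _
  have h := (poincareOff_poincareConst hμ).variance_conv_le toReal_nonneg
    (poincareOff_poincareConst hν) hf
  have := mul_le_mul_of_nonneg_left hU (toReal_nonneg (a := poincareConst μ))
  linarith

/-- Subadditivity of the Poincaré constant along convolutions. -/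
theorem poincareConst_conv_le (hμ : poincareConst μ ≠ ⊤) (hν : poincareConst ν ≠ ⊤) :
    poincareConst (μ ∗ ν) ≠ ⊤ ∧ (poincareConst (μ ∗ ν)).toReal ≤
      (poincareConst μ).toReal + (poincareConst ν).toReal := by
  have key (ε : ℝ) (hε : 0 < ε) : poincareConst (μ ∗ ν) ≤
      ENNReal.ofReal ((poincareConst μ).toReal + (poincareConst ν).toReal + ε) := by
    refine poincareConst_le_ofReal (by positivity) fun f hf =>
      (variance_conv_le_add_mul hμ hν hf).trans ?_
    exact mul_le_mul_of_nonneg_right (le_add_of_nonneg_right hε.le)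
      (integral_nonneg fun x => sq_nonneg _)
  exact ⟨ne_top_of_le_ne_top ofReal_ne_top (key 1 one_pos), le_of_forall_pos_le_add fun ε hε =>
    ENNReal.toReal_le_of_le_ofReal (by positivity) (key ε hε)⟩

theorem mul_le_of_almost_extremal {a b C D V M κ s ε : ℝ} {U U' : ℝ} (ha : 0 ≤ a) (hb : 0 ≤ b)
    (hC : 0 < C) (hD : 0 < D) (hM : 0 ≤ M) (hs : 0 ≤ s) (hε : 0 ≤ ε)
    (hV : (C - ε) * D ≤ V) (hVC : V ≤ C * D) (hU : V ≤ a * U + b * D) (hU' : V ≤ b * U' + a * D)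
    (hUU' : U + U' ≤ D + M) (hκ : (C * M - κ) ^ 2 ≤ (C * D - V) * (C * M))
    (hκ' : κ ^ 2 ≤ V * (s * M)) :
    C * (C - ε) * (a + b) ≤ a * b * (C + (√s + √ε) ^ 2) + (a ^ 2 + b ^ 2) * C := by
  have hCDM : 0 ≤ C * D * M := by positivity
  have hq := Real.sq_sqrt hCDM
  have hs2 := Real.sq_sqrt hs
  have hε2 := Real.sq_sqrt hε
  have h1 : |κ| ≤ √s * √(C * D * M) := by
    refine abs_le_of_sq_le_sq ?_ (by positivity)
    rw [mul_pow, hq, hs2]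
    nlinarith [mul_le_mul_of_nonneg_right hVC (mul_nonneg hs hM)]
  have h2 : |C * M - κ| ≤ √ε * √(C * D * M) := by
    refine abs_le_of_sq_le_sq ?_ (by positivity)
    rw [mul_pow, hq, hε2]
    nlinarith [mul_le_mul_of_nonneg_right hV (mul_nonneg hC.le hM)]
  have h3 : C * M ≤ (√s + √ε) * √(C * D * M) := by
    linarith [le_abs_self κ, le_abs_self (C * M - κ)]
  have h4 : C * M ≤ D * (√s + √ε) ^ 2 := by
    rcases hM.eq_or_lt with rfl | hM'
    · simpa using (by positivity : 0 ≤ D * (√s + √ε) ^ 2)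
    have h5 := pow_le_pow_left₀ (by positivity) h3 2
    rw [mul_pow _ √(C * D * M), hq] at h5
    have hCM : 0 < C * M := by positivity
    refine le_of_mul_le_mul_right ?_ hCM
    linarith
  have h6 : (a + b) * V ≤ a * b * (D + M) + (a ^ 2 + b ^ 2) * D := by
    linarith [mul_le_mul_of_nonneg_left hU hb, mul_le_mul_of_nonneg_left hU' ha,
      mul_le_mul_of_nonneg_left hUU' (mul_nonneg ha hb)]
  have h7 := mul_le_mul_of_nonneg_left hV (add_nonneg ha hb)
  have h8 := mul_le_mul_of_nonneg_left (h7.trans h6) hC.le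
  have h9 := mul_le_mul_of_nonneg_left h4 (mul_nonneg ha hb)
  refine le_of_mul_le_mul_right ?_ hD
  linarith

theorem sq_poincareConst_conv_mul_le (hμ : poincareConst μ ≠ ⊤) (hν : poincareConst ν ≠ ⊤) :
    (poincareConst (μ ∗ ν)).toReal ^ 2 * ((poincareConst μ).toReal + (poincareConst ν).toReal) ≤
      (poincareConst μ).toReal * (poincareConst ν).toReal *
          ((poincareConst (μ ∗ ν)).toReal + maxDirVar (μ ∗ ν)) +
        ((poincareConst μ).toReal ^ 2 + (poincareConst ν).toReal ^ 2) *
          (poincareConst (μ ∗ ν)).toReal := by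
  have hμν := (poincareConst_conv_le hμ hν).1
  have ha : 0 ≤ (poincareConst μ).toReal := toReal_nonneg
  have hb : 0 ≤ (poincareConst ν).toReal := toReal_nonneg
  have hs := maxDirVar_nonneg (μ ∗ ν)
  rcases (toReal_nonneg (a := poincareConst (μ ∗ ν))).eq_or_lt with hC | hC
  · rw [← hC]
    simpa using by positivity
  have key (ε : ℝ) (hε : 0 < ε) (hεC : ε < (poincareConst (μ ∗ ν)).toReal) :
      (poincareConst (μ ∗ ν)).toReal * ((poincareConst (μ ∗ ν)).toReal - ε) *
          ((poincareConst μ).toReal + (poincareConst ν).toReal) ≤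
        (poincareConst μ).toReal * (poincareConst ν).toReal *
          ((poincareConst (μ ∗ ν)).toReal + (√(maxDirVar (μ ∗ ν)) + √ε) ^ 2) +
        ((poincareConst μ).toReal ^ 2 + (poincareConst ν).toReal ^ 2) *
          (poincareConst (μ ∗ ν)).toReal := by
    obtain ⟨f, hf, hlt⟩ : ∃ f : EuclideanSpace ℝ (Fin d) → ℝ, BddLipschitz f ∧
        ((poincareConst (μ ∗ ν)).toReal - ε) * ∫ x, ‖fderiv ℝ f x‖ ^ 2 ∂(μ ∗ ν)
          < Var[f; μ ∗ ν] := by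
      by_contra! H
      have h := ENNReal.toReal_le_of_le_ofReal (sub_pos.2 hεC).le
        (poincareConst_le_ofReal (sub_pos.2 hεC) H)
      linarith
    obtain ⟨K, hK⟩ := hf.1
    have hVC := variance_le_poincareConst_mul hμν hK.locallyLipschitz hK.integrable_norm_fderiv_sq
    have hD : 0 < ∫ x, ‖fderiv ℝ f x‖ ^ 2 ∂(μ ∗ ν) := by
      by_contra! h
      have h0 := h.antisymm (integral_nonneg fun x => sq_nonneg _)
      rw [h0] at hlt hVC
      linarith
    have hU := (poincareOff_poincareConst hμ).variance_conv_le toReal_nonneg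
      (poincareOff_poincareConst hν) hf
    have hU' := (poincareOff_poincareConst hν).variance_conv_le toReal_nonneg
      (poincareOff_poincareConst hμ) hf
    rw [Measure.conv_comm ν μ] at hU'
    have hswap (y : EuclideanSpace ℝ (Fin d)) :
        ∫ x, fderiv ℝ f (y + x) ∂μ = ∫ x, fderiv ℝ f (x + y) ∂μ := by simp only [add_comm y]
    simp only [hswap] at hU'
    refine mul_le_of_almost_extremal ha hb hC hD (sq_nonneg _) hs hε.le hlt.le hVC hU hU' ?_
      (sq_sub_covariance_le hμν hf) ?_
    · exact integral_norm_sq_integral_fderiv_add_le hK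
    · exact (sq_covariance_le (hf.memLp 2) (memLp_two_continuousLinearMap hμν _)).trans
        (mul_le_mul_of_nonneg_left (variance_continuousLinearMap_le_maxDirVar hμν _)
          (variance_nonneg _ _))
  have hmem : ∀ᶠ ε in 𝓝[>] (0 : ℝ), 0 < ε ∧ ε < (poincareConst (μ ∗ ν)).toReal :=
    Ioo_mem_nhdsGT hC
  refine le_of_tendsto_of_tendsto (Tendsto.mono_left ?_ nhdsWithin_le_nhds)
    (Tendsto.mono_left ?_ nhdsWithin_le_nhds) (hmem.mono fun ε hε => key ε hε.1 hε.2)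
  · refine Continuous.tendsto' (by fun_prop) _ _ ?_
    ring
  · refine Continuous.tendsto' (by fun_prop) _ _ ?_
    simp [Real.sq_sqrt hs]

end Stability
/-- **Dimension-free stability of subadditivity of the Poincaré constant on convolutions.**
With `σ² := σ²(μ ⋆ ν)`,
`C_p(μ⋆ν) ≤ (C_p(μ) + C_p(ν)) − [C_p(μ)C_p(ν)/(C_p(μ)+C_p(ν))] ·
(C_p(μ⋆ν) − σ²)²/((C_p(μ⋆ν) − σ²)² + C_p(μ⋆ν)σ²)`. -/
theorem poincareConst_conv_stability {d : ℕ} (μ ν : Measure (EuclideanSpace ℝ (Fin d)))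
    [IsProbabilityMeasure μ] [IsProbabilityMeasure ν]
    (hμ2 : Integrable (fun x => ‖x‖ ^ 2) μ) (hν2 : Integrable (fun x => ‖x‖ ^ 2) ν)
    (hμp : poincareConst μ ≠ ⊤) (hνp : poincareConst ν ≠ ⊤) :
    poincareConst (μ ∗ ν) ≠ ⊤ ∧
      (poincareConst (μ ∗ ν)).toReal ≤
        ((poincareConst μ).toReal + (poincareConst ν).toReal) -
          (poincareConst μ).toReal * (poincareConst ν).toReal /
              ((poincareConst μ).toReal + (poincareConst ν).toReal) *
            (((poincareConst (μ ∗ ν)).toReal - maxDirVar (μ ∗ ν)) ^ 2 /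
              (((poincareConst (μ ∗ ν)).toReal - maxDirVar (μ ∗ ν)) ^ 2 +
                (poincareConst (μ ∗ ν)).toReal * maxDirVar (μ ∗ ν))) := by
  obtain ⟨hμν, hle⟩ := poincareConst_conv_le hμp hνp
  refine ⟨hμν, ?_⟩
  have hmain := sq_poincareConst_conv_mul_le hμp hνp
  have hs := maxDirVar_nonneg (μ ∗ ν)
  have hsC := maxDirVar_le hμν
  have ha : 0 ≤ (poincareConst μ).toReal := toReal_nonneg
  have hb : 0 ≤ (poincareConst ν).toReal := toReal_nonneg
  have hC : 0 ≤ (poincareConst (μ ∗ ν)).toReal := toReal_nonneg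
  generalize (poincareConst μ).toReal = a at *
  generalize (poincareConst ν).toReal = b at *
  generalize (poincareConst (μ ∗ ν)).toReal = C at *
  generalize maxDirVar (μ ∗ ν) = s at *
  rcases ha.eq_or_lt with rfl | ha'
  · simpa using hle
  rcases hb.eq_or_lt with rfl | hb'
  · simpa using hle
  have hab : 0 < a + b := by positivity
  have hP : 0 ≤ a * b / (a + b) := by positivity
  rcases hC.eq_or_lt with rfl | hC'
  · have h1 : a * b / (a + b) ≤ a + b := by
      rw [div_le_iff₀ hab]
      nlinarith
    obtain rfl : s = 0 := hsC.antisymm hs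
    simpa using hab.le
  have hpos : 0 < (C - s) ^ 2 + C * s := by
    nlinarith [sq_nonneg (C - s), mul_nonneg hC hs, sq_nonneg s, mul_pos hC' hC']
  have hδ : (C - s) ^ 2 / ((C - s) ^ 2 + C * s) ≤ (C - s) / C := by
    rw [div_le_div_iff₀ hpos hC']
    nlinarith [mul_nonneg (sub_nonneg.2 hsC) (sq_nonneg s)]
  have hstep : C ≤ (a + b) - a * b / (a + b) * ((C - s) / C) := by
    have : (a + b) - a * b / (a + b) * ((C - s) / C)
        = (a * b * (C + s) + (a ^ 2 + b ^ 2) * C) / (C * (a + b)) := by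
      field_simp
      ring
    rw [this, le_div_iff₀ (by positivity)]
    linarith
  linarith [mul_le_mul_of_nonneg_left hδ hP]
end
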